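/- arXiv:2404.14888 — 5 statements merged into one kernel-verified Lean document; each statement's English description precedes it below -/
import Mathlib

section
/- Let E be a countable set, P a stochastic matrix on E that is irreducible and positive recurrent with (unique) invariant probability distribution π satisfying π(i) > 0 for all i, and suppose λ(P) := sup{ ⟨Ph,h⟩_π : h : E → ℝ, ‖h‖_π = 1, π(h) = 0 } < 1. Then for every function g : E → ℝ with a ≤ g(i) ≤ b for all i (a < b), every integer n ≥ 1 and every ε > 0, the Markov chain (X_k) with transition matrix P started from π satisfies ℙ_π( (1/n) ∑_{k=0}^{n-1} g(X_k) − π(g) ≥ ε ) ≤ exp( − ((1 − max{λ(P),0})/(1 + max{λ(P),0})) · 2nε²/(b−a)² ). -/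
open Filter MeasureTheory

/-- The `m`-step transition matrix of a transition kernel `P` on a countable state space. -/
noncomputable def nStep {E : Type*} [DecidableEq E] (P : E → E → ℝ) : ℕ → E → E → ℝ
  | 0 => fun i j => if i = j then 1 else 0
  | m + 1 => fun i j => ∑' k, P i k * nStep P m k j


theorem aux_sinh_lt {s : ℝ} (hs : 0 < s) : Real.sinh s < s * Real.cosh s := by
  have hd : ∀ x : ℝ, HasDerivAt (fun s => s * Real.cosh s - Real.sinh s) (x * Real.sinh x) x := by
    intro x
    have := ((hasDerivAt_id x).mul (Real.hasDerivAt_cosh x)).sub (Real.hasDerivAt_sinh x)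
    refine HasDerivAt.congr_deriv this ?_
    simp
  have : StrictMonoOn (fun s => s * Real.cosh s - Real.sinh s) (Set.Ici 0) := by
    apply strictMonoOn_of_deriv_pos (convex_Ici 0)
    · exact fun x _ => (hd x).continuousAt.continuousWithinAt
    · intro x hx
      simp only [interior_Ici, Set.mem_Ioi] at hx
      rw [(hd x).deriv]
      exact mul_pos hx (Real.sinh_pos_iff.2 hx)
  have h := this (Set.mem_Ici.2 le_rfl) (Set.mem_Ici.2 hs.le) hs
  simp at h
  linarith

theorem aux_cosh_sub (h : ℝ) (hh : 0 < h) : Real.cosh h - 1 ≤ h * Real.sinh h / 2 := by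
  have h1 := aux_sinh_lt (half_pos hh)
  have h2 : Real.cosh h = Real.cosh (h/2)^2 + Real.sinh (h/2)^2 := by
    rw [← Real.cosh_two_mul]; congr 1; ring
  have h3 : Real.sinh h = 2 * Real.sinh (h/2) * Real.cosh (h/2) := by
    rw [← Real.sinh_two_mul]; congr 1; ring
  have h4 := Real.cosh_sq (h/2)
  have h5 : 0 < Real.sinh (h/2) := Real.sinh_pos_iff.2 (half_pos hh)
  rw [h2, h3, h4]
  nlinarith

theorem aux_M (m : ℝ) {h : ℝ} (hh : 0 ≤ h) :
    Real.cosh h - m * Real.sinh h ≤ Real.exp (h^2/2 - m*h) := by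
  let e : ℝ → ℝ := fun x => Real.exp (x^2/2 - m*x)
  have he : ∀ x, HasDerivAt e (e x * (x - m)) x := by
    intro x
    have := (((hasDerivAt_pow 2 x).div_const 2).sub ((hasDerivAt_id x).const_mul m)).exp
    refine HasDerivAt.congr_deriv this ?_
    simp [e]
  let M : ℝ → ℝ := fun x => e x - (Real.cosh x - m * Real.sinh x)
  let M' : ℝ → ℝ := fun x => e x * (x - m) - (Real.sinh x - m * Real.cosh x)
  have hM : ∀ x, HasDerivAt M (M' x) x := fun x =>
    (he x).sub ((Real.hasDerivAt_cosh x).sub ((Real.hasDerivAt_sinh x).const_mul m))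
  have hM' : ∀ x, HasDerivAt M' (e x * (x - m)^2 + M x) x := by
    intro x
    have := ((he x).mul ((hasDerivAt_id x).sub_const m)).sub
      ((Real.hasDerivAt_sinh x).sub ((Real.hasDerivAt_cosh x).const_mul m))
    refine HasDerivAt.congr_deriv this ?_
    simp [M]; ring
  have hexp : ∀ x, HasDerivAt (fun x => Real.exp (-x)) (-Real.exp (-x)) x := by
    intro x
    simpa using (hasDerivAt_neg x).exp
  have m1 : MonotoneOn (fun x => Real.exp (-x) * (M' x + M x)) (Set.Ici 0) := by
    have hd : ∀ x, HasDerivAt (fun x => Real.exp (-x) * (M' x + M x))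
        (Real.exp (-x) * (e x * (x-m)^2)) x := by
      intro x
      refine HasDerivAt.congr_deriv ((hexp x).mul ((hM' x).add (hM x))) ?_
      simp; ring
    apply monotoneOn_of_deriv_nonneg (convex_Ici 0)
    · exact fun x _ => (hd x).continuousAt.continuousWithinAt
    · exact fun x _ => (hd x).differentiableAt.differentiableWithinAt
    · intro x _
      rw [(hd x).deriv]; positivity
  have m1' : ∀ x, 0 ≤ x → 0 ≤ M' x + M x := by
    intro x hx
    have := m1 (Set.mem_Ici.2 le_rfl) (Set.mem_Ici.2 hx) hx
    simp only [M, M', e] at this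
    norm_num at this
    exact nonneg_of_mul_nonneg_right this (Real.exp_pos _)
  have m2 : MonotoneOn (fun x => Real.exp x * M x) (Set.Ici 0) := by
    have hd : ∀ x, HasDerivAt (fun x => Real.exp x * M x)
        (Real.exp x * (M' x + M x)) x := by
      intro x
      refine HasDerivAt.congr_deriv ((Real.hasDerivAt_exp x).mul (hM x)) ?_
      ring
    apply monotoneOn_of_deriv_nonneg (convex_Ici 0)
    · exact fun x _ => (hd x).continuousAt.continuousWithinAt
    · exact fun x _ => (hd x).differentiableAt.differentiableWithinAt
    · intro x hx
      rw [(hd x).deriv]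
      simp only [interior_Ici, Set.mem_Ioi] at hx
      exact mul_nonneg (Real.exp_pos _).le (m1' x hx.le)
  have := m2 (Set.mem_Ici.2 le_rfl) (Set.mem_Ici.2 hh) hh
  simp only [M, e] at this
  norm_num at this
  have := nonneg_of_mul_nonneg_right this (Real.exp_pos _)
  linarith

theorem aux_L2 (m c : ℝ) {h : ℝ} (hh : 0 < h) (hc : 1 ≤ c) :
    c * Real.cosh h - m * Real.sinh h ≤
      c * Real.cosh (c*h^2/2 - m*h) + Real.sinh (c*h^2/2 - m*h) := by
  have h1 := aux_M (m - (c-1)*h/2) hh.le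
  rw [show h^2/2 - (m - (c-1)*h/2)*h = c*h^2/2 - m*h by ring] at h1
  have h2 := aux_cosh_sub h hh
  have h3 := Real.one_le_cosh (c*h^2/2 - m*h)
  rw [← Real.cosh_add_sinh] at h1
  nlinarith [mul_nonneg (sub_nonneg.2 hc) (sub_nonneg.2 h2), mul_nonneg (sub_nonneg.2 hc) (sub_nonneg.2 h3)]

theorem aux_pos (l m : ℝ) {h : ℝ} (hh : 0 < h) (hm : m ≤ 1) (hm' : -1 ≤ m) (hl : 0 ≤ l) (hl1 : l < 1) :
    l * Real.exp (m*h + h) < Real.exp ((1+l)/(1-l)*h^2/2) := by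
  have h1l : 0 < 1 - l := by linarith
  set τ := (1-l)/(1+l) with hτ
  have hτ0 : 0 < τ := by positivity
  have hlτ : l * (1+τ) = 1 - τ := by rw [hτ]; field_simp; ring
  have hcτ : (1+l)/(1-l) = 1/τ := by rw [hτ]; field_simp
  have h1 := aux_sinh_lt hτ0
  have h2 : (1-τ) * Real.exp τ < (1+τ) * Real.exp (-τ) := by
    rw [← Real.cosh_add_sinh, ← Real.cosh_sub_sinh]; linarith
  have h3 : l < Real.exp (-2*τ) := by
    have e1 : Real.exp (-τ) = Real.exp (-2*τ) * Real.exp τ := by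
      rw [← Real.exp_add]; congr 1; ring
    rw [e1, ← hlτ] at h2
    have := Real.exp_pos τ
    by_contra hcon
    push Not at hcon
    have : Real.exp (-2*τ) * ((1+τ) * Real.exp τ) ≤ l * ((1+τ) * Real.exp τ) := by gcongr
    nlinarith
  have h4 : -2*τ ≤ 1/τ*h^2/2 - (m*h+h) := by
    have : 1/τ*h^2/2 - (m*h+h) + 2*τ = ((h - 2*τ)^2/τ)/2 + (1-m)*h := by field_simp; ring
    have : 0 ≤ ((h - 2*τ)^2/τ)/2 + (1-m)*h := by
      have : 0 ≤ 1 - m := by linarith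
      positivity
    linarith
  rw [hcτ]
  calc l * Real.exp (m*h + h) < Real.exp (1/τ*h^2/2 - (m*h+h)) * Real.exp (m*h+h) := by
        gcongr
        exact h3.trans_le (Real.exp_le_exp.2 h4)
    _ = _ := by rw [← Real.exp_add]; congr 1; ring

/-- two point inequality -/
theorem aux_two (l m : ℝ) {h : ℝ} (hh : 0 < h) (hm : m ≤ 1) (hm' : -1 ≤ m) (hl : 0 ≤ l) (hl1 : l < 1) :
    (1-l) * ((1+m)/2 * (Real.exp ((1+l)/(1-l)*h^2/2) * Real.exp (-(m*h-h)) - l)⁻¹ +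
      (1-m)/2 * (Real.exp ((1+l)/(1-l)*h^2/2) * Real.exp (-(m*h+h)) - l)⁻¹) ≤ 1 := by
  have h1l : 0 < 1 - l := by linarith
  set c := (1+l)/(1-l) with hc
  have hc1 : 1 ≤ c := by rw [hc, le_div_iff₀ h1l]; linarith
  have hcl : c * (1-l) = 1 + l := by rw [hc]; field_simp
  have k := aux_L2 m c hh hc1
  have kp := aux_pos l m hh hm hm' hl hl1
  rw [← hc] at kp
  set y := c*h^2/2 - m*h with hy
  have e1 : Real.exp (c*h^2/2) * Real.exp (-(m*h-h)) = Real.exp y * Real.exp h := by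
    rw [← Real.exp_add, ← Real.exp_add]; congr 1; rw [hy]; ring
  have e2 : Real.exp (c*h^2/2) * Real.exp (-(m*h+h)) = Real.exp y * Real.exp (-h) := by
    rw [← Real.exp_add, ← Real.exp_add]; congr 1; rw [hy]; ring
  rw [e1, e2]
  have hp2 : 0 < Real.exp y * Real.exp (-h) - l := by
    rw [← e2, Real.exp_neg, sub_pos, ← div_eq_mul_inv, lt_div_iff₀ (Real.exp_pos _)]
    exact kp
  have hp1 : 0 < Real.exp y * Real.exp h - l := by
    have : Real.exp (-h) ≤ Real.exp h := Real.exp_le_exp.2 (by linarith)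
    have := mul_le_mul_of_nonneg_left this (Real.exp_pos y).le
    linarith
  have hx : Real.exp h * Real.exp (-h) = 1 := by rw [← Real.exp_add]; simp
  have hyy : Real.exp y * Real.exp (-y) = 1 := by rw [← Real.exp_add]; simp
  rw [Real.cosh_eq, Real.sinh_eq, Real.cosh_eq, Real.sinh_eq] at k
  have k2 := mul_le_mul_of_nonneg_left k h1l.le
  have k3 : (1+l) * (Real.exp h + Real.exp (-h)) - m * (1-l) * (Real.exp h - Real.exp (-h)) ≤
      2 * Real.exp y + 2 * l * Real.exp (-y) := by
    have t1 : (1-l) * (c * ((Real.exp h + Real.exp (-h)) / 2) - m * ((Real.exp h - Real.exp (-h)) / 2)) = ((1+l) * (Real.exp h + Real.exp (-h)) - m * (1-l) * (Real.exp h - Real.exp (-h)))/2 := by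
      rw [← hcl]; ring
    have t2 : (1-l) * (c * ((Real.exp y + Real.exp (-y)) / 2) + (Real.exp y - Real.exp (-y)) / 2) = (2 * Real.exp y + 2 * l * Real.exp (-y))/2 := by
      have : (1-l) * (c * ((Real.exp y + Real.exp (-y)) / 2) + (Real.exp y - Real.exp (-y)) / 2) = c*(1-l) * ((Real.exp y + Real.exp (-y)) / 2) + (1-l)*(Real.exp y - Real.exp (-y)) / 2 := by ring
      rw [this, hcl]; ring
    rw [t1, t2] at k2
    linarith
  have k4 := mul_le_mul_of_nonneg_left k3 (Real.exp_pos y).le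
  set Y := Real.exp y
  set Y' := Real.exp (-y)
  set H := Real.exp h
  set H' := Real.exp (-h)
  have e3 : (1-l) * ((1+m)/2 * (Y*H-l)⁻¹ + (1-m)/2 * (Y*H'-l)⁻¹) =
    ((1-l) * ((1+m)/2 * (Y*H'-l) + (1-m)/2 * (Y*H-l))) / ((Y*H-l)*(Y*H'-l)) := by
    field_simp
  rw [e3, div_le_one (by positivity)]
  have e4 : (Y*H-l)*(Y*H'-l) = Y^2*(H*H') - l*Y*(H+H') + l^2 := by ring
  rw [e4, hx]
  have e5 : Y * (2 * Y + 2 * l * Y') = 2*Y^2 + 2*l*(Y*Y') := by ring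
  rw [e5, hyy] at k4
  linarith

theorem aux_convex (l r B : ℝ) (hl : 0 ≤ l) (hr : l * Real.exp B < r) :
    ConvexOn ℝ (Set.Iic B) (fun x => (r * Real.exp (-x) - l)⁻¹) := by
  have hr0 : 0 < r := lt_of_le_of_lt (by positivity) hr
  have hpos : ∀ x ∈ Set.Iic B, 0 < r * Real.exp (-x) - l := by
    intro x hx
    rw [Real.exp_neg, sub_pos, ← div_eq_mul_inv, lt_div_iff₀ (Real.exp_pos _)]
    refine lt_of_le_of_lt ?_ hr
    have : Real.exp x ≤ Real.exp B := Real.exp_le_exp.2 hx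
    gcongr
  have hd : ∀ x ∈ Set.Iic B, HasDerivAt (fun x => (r * Real.exp (-x) - l)⁻¹)
      (r * Real.exp (-x) / (r * Real.exp (-x) - l)^2) x := by
    intro x hx
    have h1 : HasDerivAt (fun x => Real.exp (-x)) (-Real.exp (-x)) x := by
      simpa using (hasDerivAt_neg x).exp
    have := ((h1.const_mul r).sub_const l).inv (hpos x hx).ne'
    refine HasDerivAt.congr_deriv this ?_
    ring
  apply MonotoneOn.convexOn_of_deriv (convex_Iic B)
  · exact fun x hx => (hd x hx).continuousAt.continuousWithinAt
  · exact fun x hx => (hd x (interior_subset hx)).differentiableAt.differentiableWithinAt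
  · intro x hx y hy hxy
    have hx := interior_subset hx
    have hy := interior_subset hy
    rw [(hd x hx).deriv, (hd y hy).deriv, div_le_div_iff₀ (pow_pos (hpos x hx) 2) (pow_pos (hpos y hy) 2)]
    have px := hpos x hx
    have py := hpos y hy
    have huv : r * Real.exp (-y) ≤ r * Real.exp (-x) := by gcongr
    set u := r * Real.exp (-x)
    set v := r * Real.exp (-y)
    have : v*(u-l)^2 - u*(v-l)^2 = (u-v)*(u*v - l^2) := by ring
    have : 0 ≤ (u-v)*(u*v-l^2) := mul_nonneg (by linarith) (by nlinarith)
    linarith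

theorem aux_hs {E : Type*} {f g : E → ℝ} {a b : ℝ} (h : HasSum f a) (hf : ∀ i, g i = f i)
    (hab : b = a) : HasSum g b := by
  have : g = f := funext hf
  rw [this, hab]; exact h

theorem aux_pi_sum {E : Type*} (π : E → ℝ) (hπpos : ∀ i, 0 < π i) (hπ : HasSum π 1)
    (x : E → ℝ) (A B : ℝ) (hAB : A < B) (hx : ∀ i, A ≤ x i ∧ x i ≤ B)
    (hx0 : HasSum (fun i => π i * x i) 0) (l : ℝ) (hl : 0 ≤ l) (hl1 : l < 1) :
    (∀ i, 0 < Real.exp ((1+l)/(1-l)*((B-A)^2/8)) * Real.exp (-(x i)) - l) ∧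
    ∀ F : Finset E, ∑ i ∈ F, π i * (Real.exp ((1+l)/(1-l)*((B-A)^2/8)) * Real.exp (-(x i)) - l)⁻¹
      ≤ (1-l)⁻¹ := by
  have h1l : 0 < 1 - l := by linarith
  have hBA : 0 < B - A := by linarith
  have hA0 : A ≤ 0 := by
    have := hasSum_le (fun i => mul_le_mul_of_nonneg_left (hx i).1 (hπpos i).le) (hπ.mul_right A) hx0
    linarith
  have hB0 : 0 ≤ B := by
    have := hasSum_le (fun i => mul_le_mul_of_nonneg_left (hx i).2 (hπpos i).le) hx0 (hπ.mul_right B)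
    linarith
  set h := (B-A)/2 with hh
  have hh0 : 0 < h := by positivity
  set m := (A+B)/(B-A) with hm
  have hmh : m * h = (A+B)/2 := by rw [hm, hh]; field_simp
  have hm1 : m ≤ 1 := by rw [hm, div_le_one hBA]; linarith
  have hm2 : -1 ≤ m := by rw [hm, le_div_iff₀ hBA]; linarith
  have e1 : m*h - h = A := by rw [hmh, hh]; ring
  have e2 : m*h + h = B := by rw [hmh, hh]; ring
  have e3 : (1+l)/(1-l)*h^2/2 = (1+l)/(1-l)*((B-A)^2/8) := by rw [hh]; ring
  have kp := aux_pos l m hh0 hm1 hm2 hl hl1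
  have kt := aux_two l m hh0 hm1 hm2 hl hl1
  rw [e2, e3] at kp
  rw [e1, e2, e3] at kt
  set r := Real.exp ((1+l)/(1-l)*((B-A)^2/8))
  have hconv := aux_convex l r B hl kp
  set φ : ℝ → ℝ := fun x => (r * Real.exp (-x) - l)⁻¹ with hφ
  have hpos : ∀ i, 0 < r * Real.exp (-(x i)) - l := by
    intro i
    rw [Real.exp_neg, sub_pos, ← div_eq_mul_inv, lt_div_iff₀ (Real.exp_pos _)]
    refine lt_of_le_of_lt ?_ kp
    have : Real.exp (x i) ≤ Real.exp B := Real.exp_le_exp.2 (hx i).2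
    gcongr
  refine ⟨hpos, fun F => ?_⟩
  have chord : ∀ i, φ (x i) ≤ (B - x i)/(B-A) * φ A + (x i - A)/(B-A) * φ B := by
    intro i
    have := hconv.2 (Set.mem_Iic.2 hAB.le) (Set.mem_Iic.2 (le_refl B))
      (div_nonneg (sub_nonneg.2 (hx i).2) hBA.le) (div_nonneg (sub_nonneg.2 (hx i).1) hBA.le)
      (by field_simp; ring)
    simp only [smul_eq_mul] at this
    rwa [show (B - x i) / (B - A) * A + (x i - A) / (B - A) * B = x i by field_simp; ring] at this
  have hs : HasSum (fun i => π i * ((B - x i)/(B-A) * φ A + (x i - A)/(B-A) * φ B))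
      (((1+m)/2 * φ A + (1-m)/2 * φ B)) := by
    have := (hπ.mul_right ((B * φ A - A * φ B)/(B-A))).add (hx0.mul_right ((φ B - φ A)/(B-A)))
    refine aux_hs this (fun i => ?_) ?_
    · skip; field_simp; ring
    · rw [hm]; field_simp; ring
  calc ∑ i ∈ F, π i * φ (x i) ≤ ∑ i ∈ F, π i * ((B - x i)/(B-A) * φ A + (x i - A)/(B-A) * φ B) := by
        apply Finset.sum_le_sum
        intro i _
        exact mul_le_mul_of_nonneg_left (chord i) (hπpos i).le
    _ ≤ (1+m)/2 * φ A + (1-m)/2 * φ B := by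
        apply sum_le_hasSum F _ hs
        intro i _
        apply mul_nonneg (hπpos i).le
        refine le_trans ?_ (chord i)
        exact (inv_pos.2 (hpos i)).le
    _ ≤ (1-l)⁻¹ := by
        rw [inv_eq_one_div, le_div_iff₀ h1l, mul_comm]
        exact kt

/-- Berger's power inequality for the numerical radius (Pearcy's proof). -/
theorem aux_berger {V : Type*} [AddCommGroup V] [Module ℂ V] (B : V →+ V →+ ℂ)
    (hB : ∀ (c : ℂ) x y, B (c • x) y = c * B x y) (T : V →ₗ[ℂ] V)
    (hT : ∀ x, ‖B (T x) x‖ ≤ (B x x).re) (n : ℕ) (x : V) :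
    (B ((T ^ n) x) x).re ≤ (B x x).re := by
  rcases Nat.eq_zero_or_pos n with rfl | hn
  · simp
  have hn0 : n ≠ 0 := hn.ne'
  set ω : ℂ := Complex.exp (2 * Real.pi * Complex.I / n)
  have hω : IsPrimitiveRoot ω n := Complex.isPrimitiveRoot_exp n hn0
  have hωn : ‖ω‖ = 1 := hω.norm'_eq_one hn0
  let y : ℕ → V := fun j => ∑ l ∈ Finset.range n, (ω ^ (j * l)) • (T ^ l) x
  have h1 : ∀ j, y j - ω ^ j • T (y j) = x - (T ^ n) x := by
    intro j
    have : ω ^ j • T (y j) = ∑ l ∈ Finset.range n, (ω ^ (j * (l+1))) • (T ^ (l+1)) x := by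
      simp only [y, map_sum, Finset.smul_sum, map_smul, smul_smul]
      apply Finset.sum_congr rfl
      intro l _
      rw [pow_succ' T l, Module.End.mul_apply, mul_add, pow_add, mul_one, mul_comm]
    rw [this, ← Finset.sum_sub_distrib]
    have := Finset.sum_range_sub' (fun l => (ω ^ (j * l)) • (T ^ l) x) n
    rw [this]
    simp [mul_comm j n, pow_mul, hω.pow_eq_one]
  have h2 : ∑ j ∈ Finset.range n, y j = n • x := by
    simp only [y]
    rw [Finset.sum_comm]
    have : ∀ l ∈ Finset.range n, ∑ j ∈ Finset.range n, (ω ^ (j * l)) • (T ^ l) x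
        = if l = 0 then n • x else 0 := by
      intro l hl
      rw [← Finset.sum_smul]
      split_ifs with h0
      · subst h0; simp [← Nat.cast_smul_eq_nsmul ℂ]
      · have hne : ω ^ l ≠ 1 := hω.pow_ne_one_of_pos_of_lt h0 (Finset.mem_range.1 hl)
        have : ∑ j ∈ Finset.range n, ω ^ (j * l) = 0 := by
          have := mul_neg_geom_sum (ω ^ l) n
          simp only [mul_comm _ l, pow_mul]
          rw [← pow_mul, mul_comm l n, pow_mul, hω.pow_eq_one, one_pow, sub_self] at this
          exact (mul_eq_zero.1 this).resolve_left (sub_ne_zero.2 hne.symm)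
        rw [this, zero_smul]
    rw [Finset.sum_congr rfl this]
    simp [hn0]
  have h3 : ∀ j, 0 ≤ (B (x - (T ^ n) x) (y j)).re := by
    intro j
    rw [← h1 j, map_sub, AddMonoidHom.sub_apply, hB, Complex.sub_re, sub_nonneg]
    calc _ ≤ ‖ω ^ j * B (T (y j)) (y j)‖ := Complex.re_le_norm _
      _ = ‖B (T (y j)) (y j)‖ := by simp [hωn]
      _ ≤ _ := hT _
  have h4 : 0 ≤ ∑ j ∈ Finset.range n, (B (x - (T ^ n) x) (y j)).re :=
    Finset.sum_nonneg (fun j _ => h3 j)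
  rw [← Complex.re_sum, ← map_sum, h2, map_nsmul, map_sub, AddMonoidHom.sub_apply] at h4
  simp at h4
  have hn' : (0:ℝ) < n := by exact_mod_cast hn
  nlinarith

/-- finite weighted version: `q i = π i * w i`, kernel `K i j` nonneg. -/
theorem aux_berger_fin {ι : Type*} [Fintype ι] (q : ι → ℝ) (hq : ∀ i, 0 ≤ q i) (K : ι → ι → ℝ)
    (hK : ∀ i j, 0 ≤ K i j) (r : ℝ) (hr : 0 < r)
    (hb : ∀ z : ι → ℝ, (∀ i, 0 ≤ z i) → ∑ i, q i * (∑ j, K i j * z j) * z i ≤ r * ∑ i, q i * z i ^ 2)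
    (Z : ℕ → ι → ℝ) (hZ0 : ∀ i, Z 0 i = 1) (hZ : ∀ n i, Z (n+1) i = ∑ j, K i j * Z n j) (n : ℕ) :
    ∑ i, q i * Z n i ≤ r ^ n * ∑ i, q i := by
  let B : (ι → ℂ) →+ (ι → ℂ) →+ ℂ := AddMonoidHom.mk' (fun f => AddMonoidHom.mk'
    (fun g => ∑ i, (q i : ℂ) * f i * (starRingEnd ℂ) (g i)) (by
      intro a b; simp [mul_add, Finset.sum_add_distrib])) (by
      intro a b; ext g; simp [mul_add, add_mul, Finset.sum_add_distrib])
  have hBa : ∀ f g, B f g = ∑ i, (q i : ℂ) * f i * (starRingEnd ℂ) (g i) := fun f g => rfl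
  let T : (ι → ℂ) →ₗ[ℂ] (ι → ℂ) :=
    { toFun := fun f i => (r⁻¹ : ℝ) * ∑ j, (K i j : ℂ) * f j
      map_add' := by intro a b; ext i; simp [mul_add, Finset.sum_add_distrib]
      map_smul' := by
        intro c a; ext i
        simp only [Pi.smul_apply, smul_eq_mul, RingHom.id_apply, Finset.mul_sum]
        apply Finset.sum_congr rfl; intros; ring }
  have hTa : ∀ f i, T f i = (r⁻¹ : ℝ) * ∑ j, (K i j : ℂ) * f j := fun f i => rfl
  have hre : ∀ f, (B f f).re = ∑ i, q i * ‖f i‖ ^ 2 := by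
    intro f
    rw [hBa, Complex.re_sum]
    apply Finset.sum_congr rfl
    intro i _
    rw [mul_assoc, Complex.mul_conj, Complex.normSq_eq_norm_sq, ← Complex.ofReal_mul, Complex.ofReal_re]
  have key := aux_berger B (by
      intro c f g
      simp only [hBa, Finset.mul_sum, Pi.smul_apply, smul_eq_mul]
      apply Finset.sum_congr rfl; intros; ring) T (by
      intro f
      rw [hre, hBa]
      have h1 : r * ‖∑ i, (q i : ℂ) * T f i * (starRingEnd ℂ) (f i)‖ ≤
          ∑ i, q i * (∑ j, K i j * ‖f j‖) * ‖f i‖ := by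
        calc _ ≤ r * ∑ i, ‖(q i : ℂ) * T f i * (starRingEnd ℂ) (f i)‖ := by
              gcongr; exact norm_sum_le _ _
          _ = ∑ i, r * (q i * ‖T f i‖ * ‖f i‖) := by
              rw [Finset.mul_sum]
              apply Finset.sum_congr rfl; intro i _
              simp [abs_of_nonneg (hq i)]
          _ ≤ _ := by
              apply Finset.sum_le_sum
              intro i _
              have : r * ‖T f i‖ ≤ ∑ j, K i j * ‖f j‖ := by
                rw [hTa, norm_mul, Complex.norm_real, Real.norm_eq_abs, abs_of_pos (inv_pos.2 hr),
                  ← mul_assoc, mul_inv_cancel₀ hr.ne', one_mul]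
                refine (norm_sum_le _ _).trans (le_of_eq ?_)
                apply Finset.sum_congr rfl; intro j _
                simp [abs_of_nonneg (hK i j)]
              calc r * (q i * ‖T f i‖ * ‖f i‖) = q i * (r * ‖T f i‖) * ‖f i‖ := by ring
                _ ≤ _ := by
                  have := hq i
                  gcongr
      have h2 := hb (fun i => ‖f i‖) (fun i => norm_nonneg _)
      exact le_of_mul_le_mul_left (h1.trans h2) hr) n (fun _ => 1)
  have hTn : ∀ n i, (T ^ n) (fun _ => 1) i = ((r⁻¹ ^ n * Z n i : ℝ) : ℂ) := by
    intro n
    induction n with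
    | zero => intro i; simp [hZ0]
    | succ k ih =>
      intro i
      rw [pow_succ', Module.End.mul_apply, hTa, hZ]
      simp only [ih]
      push_cast
      rw [pow_succ, mul_comm ((r:ℂ)⁻¹ ^ k), mul_assoc]
      congr 1
      rw [Finset.mul_sum]
      apply Finset.sum_congr rfl; intros; ring
  rw [hre, hBa] at key
  simp only [hTn] at key
  have e : (∑ i, (q i : ℂ) * ((r⁻¹ ^ n * Z n i : ℝ) : ℂ) * (starRingEnd ℂ) 1).re
      = r⁻¹ ^ n * ∑ i, q i * Z n i := by
    rw [Complex.re_sum, Finset.mul_sum]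
    apply Finset.sum_congr rfl; intro i _
    rw [map_one, mul_one, ← Complex.ofReal_mul, Complex.ofReal_re]; ring
  rw [e] at key
  simp at key
  rw [inv_mul_le_iff₀ (by positivity)] at key
  exact key

theorem aux_spec {E : Type*} [DecidableEq E]
    (π : E → ℝ) (hπpos : ∀ i, 0 < π i) (hπ1 : HasSum π 1)
    (P : E → E → ℝ) (hPnn : ∀ i j, 0 ≤ P i j) (hProw : ∀ i, HasSum (P i) 1)
    (hinv : ∀ j, HasSum (fun i => π i * P i j) (π j))
    (lamP : ℝ)
    (hlamP : lamP = sSup {c : ℝ | ∃ h : E → ℝ,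
        Real.sqrt (∑' i, π i * h i ^ 2) = 1 ∧ (∑' i, π i * h i) = 0 ∧
        c = ∑' i, π i * (∑' j, P i j * h j) * h i})
    (F : Finset E) (u : E → ℝ) :
    ∑ i ∈ F, ∑ j ∈ F, π i * P i j * u i * u j ≤
      max lamP 0 * ∑ i ∈ F, π i * u i ^ 2 + (1 - max lamP 0) * (∑ i ∈ F, π i * u i) ^ 2 := by
  have hbdd : BddAbove {c : ℝ | ∃ h : E → ℝ,
        Real.sqrt (∑' i, π i * h i ^ 2) = 1 ∧ (∑' i, π i * h i) = 0 ∧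
        c = ∑' i, π i * (∑' j, P i j * h j) * h i} := by
    refine ⟨1, ?_⟩
    rintro c ⟨h, h1, -, rfl⟩
    rw [Real.sqrt_eq_one] at h1
    have hs : Summable (fun i => π i * h i ^ 2) := by
      by_contra hc
      rw [tsum_eq_zero_of_not_summable hc] at h1
      exact zero_ne_one h1
    -- double sum
    have hcol : ∀ j, HasSum (fun i => π i * P i j * h j ^ 2) (π j * h j ^ 2) :=
      fun j => (hinv j).mul_right _
    have hS : Summable (fun p : E × E => π p.2 * P p.2 p.1 * h p.1 ^ 2) := by
      rw [summable_prod_of_nonneg]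
      · refine ⟨fun j => (hcol j).summable, ?_⟩
        simp only [(hcol _).tsum_eq]
        exact hs
      · intro p
        have := (hπpos p.2).le
        have := hPnn p.2 p.1
        positivity
    have hS' : Summable (fun p : E × E => π p.1 * P p.1 p.2 * h p.2 ^ 2) := by
      have := (Equiv.prodComm E E).summable_iff.2 hS
      exact this
    have hrow : ∀ i, Summable (fun j => P i j * h j ^ 2) := by
      intro i
      have := (hS'.prod_factor i).mul_left (π i)⁻¹
      refine this.congr ?_
      intro j
      have := (hπpos i).ne'
      simp only
      field_simp
    have hrow' : ∀ i, Summable (fun j => P i j * h j) := by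
      intro i
      refine Summable.of_norm_bounded ((hrow i).add (hProw i).summable) ?_
      intro j
      rw [Real.norm_eq_abs, abs_mul, abs_of_nonneg (hPnn i j), ← mul_add_one]
      apply mul_le_mul_of_nonneg_left _ (hPnn i j)
      nlinarith [sq_abs (h j), sq_nonneg (|h j| - 1)]
    -- pointwise: Ph * h ≤ (h^2 + P h^2)/2
    have hpt : ∀ i, |(∑' j, P i j * h j) * h i| ≤ (h i ^ 2 + ∑' j, P i j * h j ^ 2) / 2 := by
      intro i
      have e1 : (∑' j, P i j * h j) * h i = ∑' j, P i j * h j * h i := (tsum_mul_right).symm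
      have hA : HasSum (fun j => P i j * ((h i ^ 2 + h j ^ 2)/2)) ((h i ^ 2 + ∑' j, P i j * h j ^ 2) / 2) := by
        have := (((hProw i).mul_right (h i ^ 2)).add (hrow i).hasSum).div_const 2
        rw [one_mul] at this
        exact aux_hs this (fun j => by ring) rfl
      rw [abs_le]
      constructor
      · have := hasSum_le (fun j => ?_) hA.neg ((hrow' i).hasSum.mul_right (h i))
        · exact this
        · have := mul_le_mul_of_nonneg_left (show -((h i ^ 2 + h j ^ 2)/2) ≤ h j * h i by nlinarith [sq_nonneg (h i + h j)]) (hPnn i j)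
          linarith
      · refine hasSum_le (fun j => ?_) ((hrow' i).hasSum.mul_right (h i)) hA
        have := mul_le_mul_of_nonneg_left (show h j * h i ≤ ((h i ^ 2 + h j ^ 2)/2) by nlinarith [sq_nonneg (h i - h j)]) (hPnn i j)
        linarith
    have hD : HasSum (fun i => π i * ∑' j, P i j * h j ^ 2) 1 := by
      have a1 : Summable (fun i => π i * ∑' j, P i j * h j ^ 2) := by
        refine hS'.prod.congr ?_
        intro i
        simp only [mul_assoc, tsum_mul_left]
      have a2 : ∑' i, π i * ∑' j, P i j * h j ^ 2 = 1 := by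
        have : ∑' i, π i * ∑' j, P i j * h j ^ 2 = ∑' i, ∑' j, π i * P i j * h j ^ 2 := by
          simp only [mul_assoc, tsum_mul_left]
        rw [this, ← Summable.tsum_comm (f := fun i j => π i * P i j * h j ^ 2) hS', ← h1]
        exact tsum_congr (fun j => (hcol j).tsum_eq)
      rw [← a2]; exact a1.hasSum
    have hM : HasSum (fun i => π i * ((h i ^ 2 + ∑' j, P i j * h j ^ 2) / 2)) 1 := by
      have := (hs.hasSum.add hD).div_const 2
      rw [h1] at this
      refine aux_hs this (fun i => ?_) ?_
      · skip; ring
      · norm_num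
    have hle : ∀ i, |π i * (∑' j, P i j * h j) * h i| ≤ π i * ((h i ^ 2 + ∑' j, P i j * h j ^ 2) / 2) := by
      intro i
      rw [mul_assoc, abs_mul, abs_of_pos (hπpos i)]
      exact mul_le_mul_of_nonneg_left (hpt i) (hπpos i).le
    have hsum : Summable (fun i => π i * (∑' j, P i j * h j) * h i) :=
      Summable.of_norm_bounded hM.summable hle
    exact hasSum_le (fun i => (le_abs_self _).trans (hle i)) hsum.hasSum hM
  -- main
  set v : E → ℝ := fun i => if i ∈ F then u i else 0 with hv
  have hfin : ∀ f : E → ℝ, HasSum (fun i => f i * v i) (∑ i ∈ F, f i * u i) := by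
    intro f
    have : ∑ i ∈ F, f i * u i = ∑ i ∈ F, f i * v i :=
      Finset.sum_congr rfl (fun i hi => by simp [hv, hi])
    rw [this]
    apply hasSum_sum_of_ne_finset_zero
    intro i hi
    simp [hv, hi]
  set s := ∑ i ∈ F, π i * u i with hs
  set N2 := ∑ i ∈ F, π i * u i ^ 2 with hN2
  set Q := ∑ i ∈ F, ∑ j ∈ F, π i * P i j * u i * u j with hQ
  let h : E → ℝ := fun i => v i - s
  let Pv : E → ℝ := fun i => ∑ j ∈ F, P i j * u j
  have hPh : ∀ i, HasSum (fun j => P i j * h j) (Pv i - s) := by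
    intro i
    have := (hfin (P i)).sub ((hProw i).mul_right s)
    rw [one_mul] at this
    exact aux_hs this (fun j => by simp only [h]; ring) rfl
  have hmean : HasSum (fun i => π i * h i) 0 := by
    have := (hfin π).sub (hπ1.mul_right s)
    rw [one_mul, sub_self] at this
    exact aux_hs this (fun j => by simp only [h]; ring) rfl
  have hnorm : HasSum (fun i => π i * h i ^ 2) (N2 - s ^ 2) := by
    have a := ((hfin (fun i => π i * u i)).sub ((hfin π).mul_right (2 * s))).add (hπ1.mul_right (s^2))
    refine aux_hs a (fun i => ?_) ?_
    · skip
      simp only [h, hv]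
      split_ifs <;> ring
    · have : ∑ i ∈ F, π i * u i * u i = N2 := Finset.sum_congr rfl (fun i _ => by ring)
      rw [this, ← hs]; ring
  have hPvsum : HasSum (fun i => π i * Pv i) s := by
    have : HasSum (fun i => ∑ j ∈ F, π i * P i j * u j) (∑ j ∈ F, π j * u j) :=
      hasSum_sum (fun j _ => (hinv j).mul_right (u j))
    exact aux_hs this (fun i => by simp only [Pv, Finset.mul_sum, mul_assoc]) rfl
  have hform : HasSum (fun i => π i * (Pv i - s) * h i) (Q - s ^ 2) := by
    have a := (((hfin (fun i => π i * Pv i)).sub ((hfin π).mul_right s)).sub (hPvsum.mul_right s)).add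
      (hπ1.mul_right (s^2))
    refine aux_hs a (fun i => ?_) ?_
    · skip; simp only [h]; ring
    · have : ∑ i ∈ F, π i * Pv i * u i = Q := by
        refine Finset.sum_congr rfl (fun i _ => ?_)
        simp only [Pv, Finset.mul_sum, Finset.sum_mul]
        refine Finset.sum_congr rfl (fun j _ => by ring)
      rw [this, ← hs]; ring
  have hNnn : 0 ≤ N2 - s ^ 2 := hnorm.nonneg (fun i => mul_nonneg (hπpos i).le (sq_nonneg _))
  have hmain : Q - s ^ 2 ≤ lamP * (N2 - s ^ 2) := by
    rcases hNnn.eq_or_lt with h0 | hpos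
    · rw [← h0] at hnorm ⊢
      have hz := (hasSum_zero_iff_of_nonneg (fun i => mul_nonneg (hπpos i).le (sq_nonneg (h i)))).1 hnorm
      have hz' : ∀ i, h i = 0 := by
        intro i
        have := congrFun hz i
        simp only [Pi.zero_apply, mul_eq_zero, (hπpos i).ne', false_or] at this
        simpa using this
      have : HasSum (fun i => π i * (Pv i - s) * h i) 0 := by
        simp only [hz', mul_zero]; exact hasSum_zero
      rw [hform.unique this]; simp
    · set N := N2 - s^2
      have hsq : Real.sqrt N ^ 2 = N := Real.sq_sqrt hpos.le
      have hsp : 0 < Real.sqrt N := Real.sqrt_pos.2 hpos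
      have : (Q - s^2) / N ≤ lamP := by
        rw [hlamP]
        apply le_csSup hbdd
        refine ⟨fun i => h i / Real.sqrt N, ?_, ?_, ?_⟩
        · rw [Real.sqrt_eq_one]
          have := hnorm.div_const N
          rw [div_self hpos.ne'] at this
          rw [← this.tsum_eq]
          apply tsum_congr; intro i
          rw [div_pow, hsq]; ring
        · have := hmean.div_const (Real.sqrt N)
          rw [zero_div] at this
          rw [← this.tsum_eq]
          apply tsum_congr; intro i; ring
        · rw [← (hform.div_const N).tsum_eq]
          apply tsum_congr; intro i
          have : ∑' j, P i j * (h j / Real.sqrt N) = (Pv i - s) / Real.sqrt N := by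
            rw [← ((hPh i).div_const _).tsum_eq]
            apply tsum_congr; intro j; ring
          rw [this]
          nth_rewrite 1 [← hsq]
          field_simp
      rwa [div_le_iff₀ hpos] at this
  have := mul_le_mul_of_nonneg_right (le_max_left lamP 0) hNnn
  linarith

theorem aux_path {ι : Type*} [Fintype ι] (K : ι → ι → ℝ)
    (Z : ℕ → ι → ℝ) (hZ0 : ∀ i, Z 0 i = 1) (hZ : ∀ n i, Z (n+1) i = ∑ j, K i j * Z n j) (n : ℕ) :
    ∀ q : ι → ℝ, ∑ y : Fin (n+1) → ι, q (y 0) * ∏ k : Fin n, K (y k.castSucc) (y k.succ)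
      = ∑ i, q i * Z n i := by
  induction n with
  | zero =>
    intro q
    simp only [hZ0, mul_one, Finset.univ_eq_empty, Finset.prod_empty]
    exact Fintype.sum_equiv (Equiv.funUnique (Fin 1) ι) _ _ (fun y => rfl)
  | succ n ih =>
    intro q
    rw [← (Fin.consEquiv (fun _ : Fin (n+2) => ι)).sum_comp, Fintype.sum_prod_type]
    apply Finset.sum_congr rfl
    intro i _
    rw [hZ, ← ih (K i), Finset.mul_sum]
    apply Finset.sum_congr rfl
    intro y _
    rw [Fin.prod_univ_succ]
    simp [Fin.consEquiv]

theorem aux_mgf {E : Type*} [DecidableEq E]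
    (π : E → ℝ) (hπpos : ∀ i, 0 < π i) (hπ1 : HasSum π 1)
    (P : E → E → ℝ) (hPnn : ∀ i j, 0 ≤ P i j)
    (l : ℝ) (hl : 0 ≤ l) (hl1 : l < 1)
    (hspec : ∀ (F : Finset E) (u : E → ℝ), ∑ i ∈ F, ∑ j ∈ F, π i * P i j * u i * u j ≤
      l * ∑ i ∈ F, π i * u i ^ 2 + (1 - l) * (∑ i ∈ F, π i * u i) ^ 2)
    (x : E → ℝ) (A B : ℝ) (hAB : A < B) (hx : ∀ i, A ≤ x i ∧ x i ≤ B)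
    (hx0 : HasSum (fun i => π i * x i) 0) (F : Finset E) (n : ℕ) :
    ∑ y : Fin (n+1) → F, π (y 0) * Real.exp (x (y 0)) *
        ∏ k : Fin n, (P (y k.castSucc) (y k.succ) * Real.exp (x (y k.succ)))
      ≤ Real.exp ((1+l)/(1-l)*((B-A)^2/8)) ^ (n+1) := by
  have h1l : 0 < 1 - l := by linarith
  obtain ⟨hpos, hsum⟩ := aux_pi_sum π hπpos hπ1 x A B hAB hx hx0 l hl hl1
  have h0 := (aux_pi_sum π hπpos hπ1 x A B hAB hx hx0 0 le_rfl one_pos).2 F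
  set r := Real.exp ((1+l)/(1-l)*((B-A)^2/8)) with hr
  have hr0 : 0 < r := Real.exp_pos _
  have hq : ∑ i ∈ F, π i * Real.exp (x i) ≤ r := by
    have e : ∀ i, π i * (Real.exp ((1+0)/(1-0)*((B-A)^2/8)) * Real.exp (-(x i)) - 0)⁻¹
        = (Real.exp ((B-A)^2/8))⁻¹ * (π i * Real.exp (x i)) := by
      intro i
      rw [Real.exp_neg]
      norm_num
      ring
    simp only [e, ← Finset.mul_sum] at h0
    rw [inv_mul_le_iff₀ (Real.exp_pos _)] at h0
    norm_num at h0
    refine h0.trans ?_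
    rw [hr, Real.exp_le_exp]
    have : 1 ≤ (1+l)/(1-l) := by rw [le_div_iff₀ h1l]; linarith
    have h2 : 0 ≤ (B-A)^2/8 := by positivity
    nlinarith
  have key : ∀ u : E → ℝ, ∑ i ∈ F, ∑ j ∈ F, π i * P i j * u i * u j ≤
      r * ∑ i ∈ F, π i * Real.exp (-(x i)) * u i ^ 2 := by
    intro u
    refine (hspec F u).trans ?_
    have cs := Finset.sum_sq_le_sum_mul_sum_of_sq_eq_mul F
      (r := fun i => π i * u i) (f := fun i => π i * (r * Real.exp (-(x i)) - l)⁻¹)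
      (g := fun i => π i * (r * Real.exp (-(x i)) - l) * u i ^ 2)
      (fun i _ => mul_nonneg (hπpos i).le (inv_pos.2 (hpos i)).le)
      (fun i _ => mul_nonneg (mul_nonneg (hπpos i).le (hpos i).le) (sq_nonneg _))
      (fun i _ => by
        have := (hpos i).ne'
        field_simp)
    have hg : 0 ≤ ∑ i ∈ F, π i * (r * Real.exp (-(x i)) - l) * u i ^ 2 :=
      Finset.sum_nonneg (fun i _ => mul_nonneg (mul_nonneg (hπpos i).le (hpos i).le) (sq_nonneg _))
    have c2 := cs.trans (mul_le_mul_of_nonneg_right (hsum F) hg)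
    have c3 : (1-l) * (∑ i ∈ F, π i * u i)^2 ≤ ∑ i ∈ F, π i * (r * Real.exp (-(x i)) - l) * u i ^ 2 := by
      rw [inv_mul_eq_div, le_div_iff₀ h1l] at c2
      linarith
    have e : ∑ i ∈ F, π i * (r * Real.exp (-(x i)) - l) * u i ^ 2 =
        r * ∑ i ∈ F, π i * Real.exp (-(x i)) * u i ^ 2 - l * ∑ i ∈ F, π i * u i ^ 2 := by
      rw [Finset.mul_sum, Finset.mul_sum, ← Finset.sum_sub_distrib]
      apply Finset.sum_congr rfl; intros; ring
    linarith
  let q : F → ℝ := fun i => π i * Real.exp (x i)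
  let K : F → F → ℝ := fun i j => P i j * Real.exp (x j)
  let Z : ℕ → F → ℝ := fun n => Nat.rec (fun _ => 1) (fun _ z i => ∑ j, K i j * z j) n
  have hb := aux_berger_fin q (fun i => (mul_pos (hπpos i) (Real.exp_pos _)).le) K
    (fun i j => mul_nonneg (hPnn i j) (Real.exp_pos _).le) r hr0 (by
      intro z _
      have k := key (fun i => if h : i ∈ F then Real.exp (x i) * z ⟨i, h⟩ else 0)
      rw [← Finset.sum_coe_sort F, ← Finset.sum_coe_sort F] at k
      simp only [← Finset.sum_coe_sort F (fun j => π _ * P _ j * _ * _)] at k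
      simp only [Finset.coe_mem, dite_true, Subtype.coe_eta] at k
      convert k using 1
      · apply Finset.sum_congr rfl; intro i _
        simp only [q, K, Finset.mul_sum, Finset.sum_mul]
        apply Finset.sum_congr rfl; intro j _
        ring
      · congr 1
        apply Finset.sum_congr rfl; intro i _
        simp only [q]
        rw [Real.exp_neg]
        have := (Real.exp_pos (x i)).ne'
        field_simp) Z (fun _ => rfl) (fun _ _ => rfl) n
  rw [← aux_path K Z (fun _ => rfl) (fun _ _ => rfl) n q] at hb
  refine hb.trans ?_
  rw [pow_succ]
  have : ∑ i, q i ≤ r := by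
    rw [Finset.sum_coe_sort F (fun i => π i * Real.exp (x i))]; exact hq
  gcongr


/-- Hoeffding's inequality. -/
theorem dtmc_hoeffding
    {E : Type*} [Countable E] [DecidableEq E] [MeasurableSpace E] [DiscreteMeasurableSpace E]
    (π : E → ℝ) (hπpos : ∀ i, 0 < π i) (hπ1 : ∑' i, π i = 1)
    (P : E → E → ℝ) (hPnn : ∀ i j, 0 ≤ P i j) (hPsumm : ∀ i, Summable (P i))
    (hProw : ∀ i, ∑' j, P i j = 1)
    -- irreducibility (together with the invariant probability distribution `π` with
    -- `π i > 0`, this is equivalent to irreducibility plus positive recurrence)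
    (hirr : ∀ i j, ∃ m, 0 < nStep P m i j)
    (hinv : ∀ j, ∑' i, π i * P i j = π j)
    -- the spectral quantity `λ(P) = sup { ⟨Ph,h⟩_π : ‖h‖_π = 1, π(h) = 0 }`
    (lamP : ℝ)
    (hlamP : lamP = sSup {c : ℝ | ∃ h : E → ℝ,
        Real.sqrt (∑' i, π i * h i ^ 2) = 1 ∧ (∑' i, π i * h i) = 0 ∧
        c = ∑' i, π i * (∑' j, P i j * h j) * h i})
    (hgap : lamP < 1)
    -- `μ` is the trajectory law of the chain with transition matrix `P` started from `π`,
    -- characterized by its finite-dimensional (cylinder) distributions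
    (μ : Measure (ℕ → E)) [IsProbabilityMeasure μ]
    (hμ : ∀ (m : ℕ) (x : ℕ → E),
      μ {ω | ∀ k ≤ m, ω k = x k} =
        ENNReal.ofReal (π (x 0) * ∏ k ∈ Finset.range m, P (x k) (x (k + 1))))
    (g : E → ℝ) (a b : ℝ) (hab : a < b) (hg : ∀ i, a ≤ g i ∧ g i ≤ b)
    (n : ℕ) (hn : 1 ≤ n) (ε : ℝ) (hε : 0 < ε) :
    μ {ω | (n : ℝ)⁻¹ * ∑ k ∈ Finset.range n, g (ω k) - ∑' i, π i * g i ≥ ε} ≤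
      ENNReal.ofReal (Real.exp
        (-((1 - max lamP 0) / (1 + max lamP 0) * (2 * n * ε ^ 2 / (b - a) ^ 2)))) := by
  have hπ : HasSum π 1 := by
    have : Summable π := by
      by_contra hc
      rw [tsum_eq_zero_of_not_summable hc] at hπ1
      exact zero_ne_one hπ1
    rw [← hπ1]; exact this.hasSum
  have hP : ∀ i, HasSum (P i) 1 := fun i => by
    have := (hPsumm i).hasSum
    rwa [hProw i] at this
  have hinv' : ∀ j, HasSum (fun i => π i * P i j) (π j) := by
    intro j
    have : Summable (fun i => π i * P i j) := by
      by_contra hc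
      have h1 := hinv j
      rw [tsum_eq_zero_of_not_summable hc] at h1
      exact (hπpos j).ne h1
    have h2 := this.hasSum
    rwa [hinv j] at h2
  set l := max lamP 0 with hl
  have hl0 : 0 ≤ l := le_max_right _ _
  have hl1 : l < 1 := max_lt hgap one_pos
  have hspec := aux_spec π hπpos hπ P hPnn hP hinv' lamP hlamP
  have hgs : Summable (fun i => π i * g i) := by
    refine Summable.of_norm_bounded (hπ.summable.mul_right (|a| + |b|)) ?_
    intro i
    rw [Real.norm_eq_abs, abs_mul, abs_of_pos (hπpos i)]
    apply mul_le_mul_of_nonneg_left _ (hπpos i).le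
    rw [abs_le]
    constructor
    · linarith [neg_abs_le a, abs_nonneg b, (hg i).1]
    · linarith [le_abs_self b, abs_nonneg a, (hg i).2]
  set G := ∑' i, π i * g i with hG
  obtain ⟨m, rfl⟩ : ∃ m, n = m + 1 := ⟨n - 1, by omega⟩
  have h1l : 0 < 1 - l := by linarith
  set c := (1+l)/(1-l) with hc
  have hc0 : 0 < c := by positivity
  have hba : 0 < b - a := by linarith
  set t := 4*ε/(c*(b-a)^2) with ht
  have ht0 : 0 < t := by positivity
  set x : E → ℝ := fun i => t * (g i - G) with hxdef
  have hx0 : HasSum (fun i => π i * x i) 0 :=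
    aux_hs ((hgs.hasSum.sub (hπ.mul_right G)).mul_left t) (fun i => by simp only [x]; ring)
      (by rw [← hG]; ring)
  have hmgf := aux_mgf π hπpos hπ P hPnn l hl0 hl1 hspec x (t*(a-G)) (t*(b-G))
    (by apply mul_lt_mul_of_pos_left _ ht0; linarith)
    (fun i => ⟨mul_le_mul_of_nonneg_left (by linarith [(hg i).1]) ht0.le,
      mul_le_mul_of_nonneg_left (by linarith [(hg i).2]) ht0.le⟩) hx0
  set S := {ω : ℕ → E | ((m+1 : ℕ) : ℝ)⁻¹ * ∑ k ∈ Finset.range (m+1), g (ω k) - G ≥ ε} with hS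
  set C := Real.exp (-(t * ((m+1 : ℕ) * ε))) with hC
  let wt : (Fin (m+1) → E) → ℝ := fun y => π (y 0) * Real.exp (x (y 0)) *
        ∏ k : Fin m, (P (y k.castSucc) (y k.succ) * Real.exp (x (y k.succ)))
  have hwt0 : ∀ y, 0 ≤ wt y := fun y => mul_nonneg (mul_pos (hπpos _) (Real.exp_pos _)).le
    (Finset.prod_nonneg (fun k _ => mul_nonneg (hPnn _ _) (Real.exp_pos _).le))
  have hwt : ∀ y, wt y = (π (y 0) * ∏ k : Fin m, P (y k.castSucc) (y k.succ)) *
      Real.exp (∑ k, x (y k)) := by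
    intro y
    simp only [wt]
    rw [Fin.sum_univ_succ, Real.exp_add, Real.exp_sum, Finset.prod_mul_distrib]
    ring
  let cyl : (Fin (m+1) → E) → Set (ℕ → E) := fun y => {ω | ∀ k : Fin (m+1), ω k = y k}
  have hcyl : ∀ y, μ (cyl y) = ENNReal.ofReal (π (y 0) * ∏ k : Fin m, P (y k.castSucc) (y k.succ)) := by
    intro y
    have := hμ m (fun k => if h : k < m + 1 then y ⟨k, h⟩ else y 0)
    have e1 : cyl y = {ω | ∀ k ≤ m, ω k = (fun k => if h : k < m + 1 then y ⟨k, h⟩ else y 0) k} := by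
      ext ω
      simp only [cyl, Set.mem_ofPred_eq]
      constructor
      · intro h k hk
        have hk' : k < m + 1 := by omega
        simp only [hk', dite_true]
        exact h ⟨k, hk'⟩
      · intro h k
        have := h k (by omega)
        simpa only [k.isLt, dite_true] using this
    rw [e1, this]
    congr 1
    rw [Finset.prod_range]
    congr 1
    apply Finset.prod_congr rfl
    intro k _
    have h1 : (k : ℕ) < m + 1 := by omega
    have h2 : (k : ℕ) + 1 < m + 1 := by omega
    simp only [h1, h2, dite_true]
    rfl
  have hcyl2 : ∀ y, μ (cyl y ∩ S) ≤ ENNReal.ofReal (C * wt y) := by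
    intro y
    by_cases hy : ((m+1 : ℕ) : ℝ) * ε ≤ ∑ k, (g (y k) - G)
    · refine (measure_mono Set.inter_subset_left).trans ?_
      rw [hcyl]
      apply ENNReal.ofReal_le_ofReal
      rw [hwt]
      have hp : 0 ≤ π (y 0) * ∏ k : Fin m, P (y k.castSucc) (y k.succ) :=
        mul_nonneg (hπpos _).le (Finset.prod_nonneg (fun k _ => hPnn _ _))
      have : 1 ≤ C * Real.exp (∑ k, x (y k)) := by
        rw [hC, ← Real.exp_add, Real.one_le_exp_iff]
        simp only [x, ← Finset.mul_sum]
        have := mul_le_mul_of_nonneg_left hy ht0.le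
        linarith
      nlinarith
    · have : cyl y ∩ S = ∅ := by
        ext ω
        simp only [Set.mem_inter_iff, Set.mem_empty_iff_false, iff_false, not_and]
        intro h1 h2
        apply hy
        have h2 : ((m+1 : ℕ) : ℝ)⁻¹ * ∑ k ∈ Finset.range (m+1), g (ω k) - G ≥ ε := h2
        rw [Finset.sum_range] at h2
        have h1 : ∀ k : Fin (m+1), ω k = y k := h1
        simp only [h1] at h2
        rw [Finset.sum_sub_distrib]
        simp only [Finset.sum_const, Finset.card_univ, Fintype.card_fin, nsmul_eq_mul]
        have hm : (0:ℝ) < ((m+1 : ℕ) : ℝ) := by positivity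
        have h3 : ε + G ≤ ((m+1 : ℕ) : ℝ)⁻¹ * ∑ k, g (y k) := by linarith
        rw [inv_mul_eq_div, le_div_iff₀ hm] at h3
        linarith
      rw [this]; simp
  have hcover : S ⊆ ⋃ y, cyl y ∩ S := by
    intro ω hω
    exact Set.mem_iUnion.2 ⟨fun k => ω k, fun k => rfl, hω⟩
  refine (measure_mono hcover).trans ((measure_iUnion_le _).trans ?_)
  refine (ENNReal.tsum_le_tsum hcyl2).trans ?_
  rw [ENNReal.tsum_eq_iSup_sum]
  refine iSup_le (fun s => ?_)
  rw [← ENNReal.ofReal_sum_of_nonneg (fun y _ => mul_nonneg (Real.exp_pos _).le (hwt0 y))]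
  apply ENNReal.ofReal_le_ofReal
  rw [← Finset.mul_sum]
  let F : Finset E := s.biUnion (fun y => Finset.univ.image y)
  have hF : ∑ y ∈ s, wt y ≤ ∑ y : Fin (m+1) → F, wt (fun k => (y k : E)) := by
    classical
    have hinj : Function.Injective (fun (y : Fin (m+1) → F) (k : Fin (m+1)) => (y k : E)) := by
      intro y y' h
      funext k
      exact Subtype.ext (congrFun h k)
    rw [← Finset.sum_image (s := Finset.univ) (f := wt)
      (g := fun (y : Fin (m+1) → F) (k : Fin (m+1)) => (y k : E)) (fun _ _ _ _ h => hinj h)]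
    apply Finset.sum_le_sum_of_subset_of_nonneg
    · intro y hy
      rw [Finset.mem_image]
      refine ⟨fun k => ⟨y k, ?_⟩, Finset.mem_univ _, rfl⟩
      exact Finset.mem_biUnion.2 ⟨y, hy, Finset.mem_image_of_mem _ (Finset.mem_univ _)⟩
    · intro y _ _; exact hwt0 y
  have hfin := hF.trans (hmgf F m)
  refine (mul_le_mul_of_nonneg_left hfin (Real.exp_pos _).le).trans ?_
  rw [← Real.exp_nat_mul, ← Real.exp_add, Real.exp_le_exp]
  apply le_of_eq
  have hc' : (1-l)/(1+l) = 1/c := by rw [hc]; field_simp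
  rw [hc', ← hc, ht]
  field_simp
  ring
end

section
/- Let E be a finite set, Q an irreducible Q-matrix on E with invariant probability distribution π, π(i) > 0 for all i. Fix t > 0 and ε > 0, and let g : E → ℝ satisfy a ≤ g(i) ≤ b for all i (a < b). For each integer k ≥ 1, let P^{t/k} := exp((t/k)Q) (matrix exponential) and let ℙ_π^{(k)} be the law of the Markov chain (X_i^{(k)})_{i≥0} with one-step transition matrix P^{t/k} and initial distribution π. Then limsup_{k→∞} ℙ_π^{(k)}( (1/k) ∑_{i=0}^{k-1} g(X_i^{(k)}) − π(g) ≥ ε ) ≤ exp( − λ(Q) t ε² / (b−a)² ). -/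
open Filter MeasureTheory Matrix

namespace CtmcH

/-- gap inequality -/
lemma gap {E : Type*} [Fintype E] (Q : Matrix E E ℝ) (hQrow : ∀ i, ∑ j, Q i j = 0)
    (π : E → ℝ) (hπpos : ∀ i, 0 < π i) (hπ1 : ∑ i, π i = 1)
    (hinv : ∀ j, ∑ i, π i * Q i j = 0) (lam : ℝ) (hl : 0 < lam)
    (hlam : lam = sInf {c : ℝ | ∃ f : E → ℝ,
          Real.sqrt (∑ i, π i * f i ^ 2) = 1 ∧ (∑ i, π i * f i) = 0 ∧
          c = -(∑ i, π i * ((∑ j, Q i j * f j) * f i))}) (f : E → ℝ) :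
    ∑ i, π i * ((∑ j, Q i j * f j) * f i) ≤
      lam * (∑ i, π i * f i) ^ 2 - lam * ∑ i, π i * f i ^ 2 := by
  have hbdd : BddBelow {c : ℝ | ∃ f : E → ℝ,
          Real.sqrt (∑ i, π i * f i ^ 2) = 1 ∧ (∑ i, π i * f i) = 0 ∧
          c = -(∑ i, π i * ((∑ j, Q i j * f j) * f i))} := by
    by_contra h
    rw [Real.sInf_of_not_bddBelow h] at hlam
    linarith
  set m := ∑ i, π i * f i with hm
  obtain ⟨u, hu⟩ : ∃ u : E → ℝ, ∀ i, f i = u i + m := ⟨fun i => f i - m, fun i => by ring⟩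
  have hum : ∑ i, π i * u i = 0 := by
    have : ∑ i, π i * f i = ∑ i, π i * u i + (∑ i, π i) * m := by
      rw [Finset.sum_mul, ← Finset.sum_add_distrib]
      exact Finset.sum_congr rfl fun i _ => by rw [hu]; ring
    rw [hπ1] at this; linarith
  have hsq : ∑ i, π i * f i ^ 2 = ∑ i, π i * u i ^ 2 + m ^ 2 := by
    have : ∑ i, π i * f i ^ 2 = ∑ i, π i * u i ^ 2 + 2 * m * ∑ i, π i * u i
        + (∑ i, π i) * m ^ 2 := by
      rw [Finset.sum_mul, Finset.mul_sum, ← Finset.sum_add_distrib, ← Finset.sum_add_distrib]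
      exact Finset.sum_congr rfl fun i _ => by rw [hu]; ring
    rw [this, hum, hπ1]; ring
  have hQf : ∀ i, ∑ j, Q i j * f j = ∑ j, Q i j * u j := by
    intro i
    have : ∑ j, Q i j * f j = ∑ j, Q i j * u j + (∑ j, Q i j) * m := by
      rw [Finset.sum_mul, ← Finset.sum_add_distrib]
      exact Finset.sum_congr rfl fun j _ => by rw [hu]; ring
    rw [this, hQrow]; ring
  have hz : ∑ i, π i * (∑ j, Q i j * u j) = 0 := by
    simp_rw [Finset.mul_sum]
    rw [Finset.sum_comm]
    apply Finset.sum_eq_zero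
    intro j _
    have := hinv j
    calc ∑ i, π i * (Q i j * u j) = (∑ i, π i * Q i j) * u j := by
          rw [Finset.sum_mul]; exact Finset.sum_congr rfl fun i _ => by ring
      _ = 0 := by rw [this]; ring
  have hquad : ∑ i, π i * ((∑ j, Q i j * f j) * f i) =
      ∑ i, π i * ((∑ j, Q i j * u j) * u i) := by
    have : ∑ i, π i * ((∑ j, Q i j * f j) * f i) =
      ∑ i, π i * ((∑ j, Q i j * u j) * u i) + m * ∑ i, π i * (∑ j, Q i j * u j) := by
      rw [Finset.mul_sum, ← Finset.sum_add_distrib]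
      exact Finset.sum_congr rfl fun i _ => by rw [hQf, hu i]; ring
    rw [this, hz]; ring
  rw [hquad, hsq]
  set S := ∑ i, π i * u i ^ 2 with hS
  have hS0 : 0 ≤ S := Finset.sum_nonneg fun i _ => mul_nonneg (hπpos i).le (sq_nonneg _)
  rcases hS0.eq_or_lt with h0 | hpos
  · have hu0 : ∀ i, u i = 0 := by
      intro i
      have := (Finset.sum_eq_zero_iff_of_nonneg (fun i _ => mul_nonneg (hπpos i).le
        (sq_nonneg (u i)))).1 h0.symm i (Finset.mem_univ i)
      have h2 := (mul_eq_zero.1 this).resolve_left (hπpos i).ne'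
      exact pow_eq_zero_iff (two_ne_zero) |>.1 h2
    rw [← h0]
    simp [hu0]
  · set r := Real.sqrt S with hr
    have hrpos : 0 < r := Real.sqrt_pos.2 hpos
    have hr2 : r ^ 2 = S := Real.sq_sqrt hS0
    have key := csInf_le hbdd (a := -(∑ i, π i * ((∑ j, Q i j * (u j / r)) * (u i / r))))
      ⟨fun i => u i / r, ?_, ?_, rfl⟩
    · rw [← hlam] at key
      have : ∑ i, π i * ((∑ j, Q i j * (u j / r)) * (u i / r)) =
          (∑ i, π i * ((∑ j, Q i j * u j) * u i)) / S := by
        rw [Finset.sum_div]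
        refine Finset.sum_congr rfl fun i _ => ?_
        have : ∑ j, Q i j * (u j / r) = (∑ j, Q i j * u j) / r := by
          rw [Finset.sum_div]
          exact Finset.sum_congr rfl fun j _ => by ring
        rw [this, ← hr2]; field_simp
      rw [this, ← neg_div, le_div_iff₀ hpos] at key
      nlinarith
    · have : ∑ i, π i * (u i / r) ^ 2 = 1 := by
        have : ∑ i, π i * (u i / r) ^ 2 = S / r ^ 2 := by
          rw [hS, Finset.sum_div]
          exact Finset.sum_congr rfl fun j _ => by ring
        rw [this, hr2, div_self hpos.ne']
      simp [this]
    · have : ∑ i, π i * (u i / r) = (∑ i, π i * u i) / r := by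
        rw [Finset.sum_div]
        exact Finset.sum_congr rfl fun j _ => by ring
      simp [this, hum]

lemma key_ineq {E : Type*} [Fintype E]
    (π : E → ℝ) (hπpos : ∀ i, 0 < π i) (hπ1 : ∑ i, π i = 1)
    (lam θ α β : ℝ) (hl : 0 < lam) (hθ : 0 < θ) (h : E → ℝ) (hα : α < 0) (hβ : 0 < β)
    (hh : ∀ i, α ≤ h i ∧ h i ≤ β) (hmean : ∑ i, π i * h i = 0) (f : E → ℝ) :
    lam * (∑ i, π i * f i) ^ 2 - lam * ∑ i, π i * f i ^ 2 + θ * ∑ i, π i * (h i * f i ^ 2) ≤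
      θ ^ 2 * (β - α) ^ 2 / (4 * lam) * ∑ i, π i * f i ^ 2 := by
  set L := θ ^ 2 * (β - α) ^ 2 / (4 * lam) with hL
  have hLl : lam * L = θ ^ 2 * (β - α) ^ 2 / 4 := by rw [hL]; field_simp
  set s := lam + L with hs
  have hsβ : 0 < s - θ * β := by
    have h1 : θ * (β - α) ≤ s := by
      have : 0 ≤ lam * (s - θ * (β - α)) := by
        have := sq_nonneg (lam - θ * (β - α) / 2)
        rw [hs]; nlinarith
      nlinarith [nonneg_of_mul_nonneg_right this hl]
    nlinarith [mul_pos hθ (neg_pos.2 hα)]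
  have hsα : 0 < s - θ * α := by nlinarith
  have hw : ∀ i, 0 < s - θ * h i := fun i => by nlinarith [(hh i).2]
  have hinvw : lam * ∑ i, π i / (s - θ * h i) ≤ 1 := by
    have h1 : ∑ i, π i / (s - θ * h i) ≤
        ∑ i, (π i * (s - θ * (α + β)) + θ * (π i * h i)) / ((s - θ * α) * (s - θ * β)) := by
      refine Finset.sum_le_sum fun i _ => ?_
      rw [div_le_div_iff₀ (hw i) (mul_pos hsα hsβ)]
      have h3 : 0 ≤ π i * (θ ^ 2 * ((h i - α) * (β - h i))) :=
        mul_nonneg (hπpos i).le (mul_nonneg (sq_nonneg _)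
          (mul_nonneg (by linarith [(hh i).1]) (by linarith [(hh i).2])))
      nlinarith
    rw [← Finset.sum_div, Finset.sum_add_distrib, ← Finset.sum_mul, ← Finset.mul_sum, hπ1,
      hmean] at h1
    calc _ ≤ lam * ((1 * (s - θ * (α + β)) + θ * 0) / ((s - θ * α) * (s - θ * β))) :=
          mul_le_mul_of_nonneg_left h1 hl.le
      _ ≤ 1 := by
        rw [← mul_div_assoc, div_le_one (mul_pos hsα hsβ)]
        rw [hs]
        nlinarith [sq_nonneg (L - θ * (α + β) / 2)]
  have hCS : (∑ i, π i * f i) ^ 2 ≤ (∑ i, π i / (s - θ * h i)) *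
      ∑ i, π i * ((s - θ * h i) * f i ^ 2) := by
    apply Finset.sum_sq_le_sum_mul_sum_of_sq_le_mul
    · intro i _; exact div_nonneg (hπpos i).le (hw i).le
    · intro i _; exact mul_nonneg (hπpos i).le (mul_nonneg (hw i).le (sq_nonneg _))
    · intro i _
      have := (hw i).ne'
      apply le_of_eq
      field_simp
  have hW : ∑ i, π i * ((s - θ * h i) * f i ^ 2) =
      s * ∑ i, π i * f i ^ 2 - θ * ∑ i, π i * (h i * f i ^ 2) := by
    rw [Finset.mul_sum, Finset.mul_sum, ← Finset.sum_sub_distrib]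
    exact Finset.sum_congr rfl fun i _ => by ring
  have hW0 : 0 ≤ ∑ i, π i * ((s - θ * h i) * f i ^ 2) :=
    Finset.sum_nonneg fun i _ => mul_nonneg (hπpos i).le (mul_nonneg (hw i).le (sq_nonneg _))
  have h5 : lam * (∑ i, π i * f i) ^ 2 ≤ ∑ i, π i * ((s - θ * h i) * f i ^ 2) := by
    calc _ ≤ lam * ((∑ i, π i / (s - θ * h i)) * ∑ i, π i * ((s - θ * h i) * f i ^ 2)) :=
          mul_le_mul_of_nonneg_left hCS hl.le
      _ = (lam * (∑ i, π i / (s - θ * h i))) * ∑ i, π i * ((s - θ * h i) * f i ^ 2) := by ring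
      _ ≤ 1 * _ := mul_le_mul_of_nonneg_right hinvw hW0
      _ = _ := one_mul _
  rw [hW, hs] at h5
  linarith

lemma path_sum {E : Type*} [Fintype E] [DecidableEq E] (M : Matrix E E ℝ) (n : ℕ)
    (F G : E → ℝ) :
    ∑ y : Fin (n + 1) → E, F (y 0) * ((∏ l : Fin n, M (y l.castSucc) (y l.succ)) * G (y (Fin.last n)))
      = ∑ i, F i * ((M ^ n) *ᵥ G) i := by
  induction n generalizing F with
  | zero =>
    simp only [Finset.univ_eq_empty, Finset.prod_empty, one_mul, pow_zero, one_mulVec]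
    exact Fintype.sum_equiv (Equiv.funUnique (Fin 1) E) _ _ (fun y => rfl)
  | succ n ih =>
    rw [← (Fin.consEquiv (fun _ : Fin (n + 2) => E)).sum_comp, Fintype.sum_prod_type,
      Finset.sum_comm]
    have := ih (F ᵥ* M)
    have e : ∑ i, F i * ((M ^ (n+1)) *ᵥ G) i = F ⬝ᵥ ((M ^ (n+1)) *ᵥ G) := rfl
    have e2 : ∑ i, (F ᵥ* M) i * ((M ^ n) *ᵥ G) i = (F ᵥ* M) ⬝ᵥ ((M ^ n) *ᵥ G) := rfl
    rw [e, pow_succ', ← mulVec_mulVec, dotProduct_mulVec, ← e2, ← this]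
    refine Finset.sum_congr rfl fun y _ => ?_
    simp only [vecMul, dotProduct]
    rw [Finset.sum_mul]
    refine Finset.sum_congr rfl fun i _ => ?_
    rw [Fin.prod_univ_succ]
    simp [Fin.consEquiv, ← Fin.succ_last, Fin.castSucc_succ]
    ring

section
open scoped Matrix.Norms.Operator

lemma hasSum_exp {E : Type*} [Fintype E] [DecidableEq E] (A : Matrix E E ℝ) :
    HasSum (fun n : ℕ => ((n.factorial : ℝ)⁻¹) • A ^ n) (NormedSpace.exp A) :=
  NormedSpace.exp_series_hasSum_exp' (𝕂 := ℝ) A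

lemma deriv_entry {E : Type*} [Fintype E] [DecidableEq E] (A B : Matrix E E ℝ) (i j : E) :
    HasDerivAt (fun s : ℝ => (NormedSpace.exp (s • B) * NormedSpace.exp (s • A)) i j)
      ((B + A) i j) 0 := by
  have h1 := (hasDerivAt_exp_smul_const (𝕂 := ℝ) B (0:ℝ)).mul (hasDerivAt_exp_smul_const (𝕂 := ℝ) A (0:ℝ))
  simp only [zero_smul, NormedSpace.exp_zero, one_mul, mul_one] at h1
  have h2 := hasDerivAt_pi.1 h1 i
  exact hasDerivAt_pi.1 h2 j
end

lemma exp_nonneg {E : Type*} [Fintype E] [DecidableEq E] (Q : Matrix E E ℝ)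
    (hQoff : ∀ i j, i ≠ j → 0 ≤ Q i j) (s : ℝ) (hs : 0 ≤ s) (i j : E) :
    0 ≤ NormedSpace.exp (s • Q) i j := by
  set c : ℝ := ∑ i, |Q i i| with hc
  have hdec : s • Q = diagonal (fun _ => -(s * c)) + s • (Q + diagonal (fun _ => c)) := by
    ext a b
    by_cases h : a = b
    · subst h; simp
    · simp [h]
  have hcomm : Commute (diagonal (fun _ : E => -(s * c))) (s • (Q + diagonal (fun _ => c))) := by
    have : diagonal (fun _ : E => -(s * c)) = (-(s * c)) • (1 : Matrix E E ℝ) := by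
      rw [smul_one_eq_diagonal]
    rw [this]
    exact (Commute.one_left _).smul_left _
  rw [hdec, Matrix.exp_add_of_commute _ _ hcomm, Matrix.exp_diagonal, diagonal_mul]
  set R : Matrix E E ℝ := s • (Q + diagonal (fun _ => c)) with hR
  have hB : ∀ a b, 0 ≤ R a b := by
    intro a b
    rw [hR, Matrix.smul_apply, smul_eq_mul]
    refine mul_nonneg hs ?_
    by_cases h : a = b
    · subst h
      simp
      have h1 : |Q a a| ≤ c := Finset.single_le_sum (f := fun i => |Q i i|)
        (fun i _ => abs_nonneg _) (Finset.mem_univ a)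
      linarith [neg_abs_le (Q a a)]
    · simp [h, hQoff a b h]
  have hpow : ∀ n a b, 0 ≤ (R ^ n) a b := by
    intro n
    induction n with
    | zero => intro a b; by_cases h : a = b <;> simp [h, one_apply]
    | succ n ih =>
      intro a b
      rw [pow_succ, mul_apply]
      exact Finset.sum_nonneg fun l _ => mul_nonneg (ih _ _) (hB _ _)
  refine mul_nonneg ?_ ?_
  · rw [Pi.coe_exp, ← Real.exp_eq_exp_ℝ]; positivity
  · have h1 := hasSum_exp R
    have h2 := Pi.hasSum.1 (Pi.hasSum.1 h1 i) j
    exact h2.nonneg fun n => mul_nonneg (by positivity) (hpow n i j)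

lemma exp_one_vec {E : Type*} [Fintype E] [DecidableEq E] (Q : Matrix E E ℝ)
    (hQrow : ∀ i, ∑ j, Q i j = 0) (s : ℝ) :
    NormedSpace.exp (s • Q) *ᵥ 1 = 1 := by
  have h0 : (s • Q) *ᵥ 1 = 0 := by
    ext i; simp [mulVec, dotProduct, ← Finset.mul_sum, hQrow]
  have h1 := hasSum_exp (s • Q)
  ext i
  have h2 : HasSum (fun n : ℕ => ∑ j, (((n.factorial : ℝ)⁻¹) • (s • Q) ^ n) i j)
      (∑ j, NormedSpace.exp (s • Q) i j) :=
    hasSum_sum fun j _ => Pi.hasSum.1 (Pi.hasSum.1 h1 i) j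
  have h3 : ∀ n : ℕ, n ≠ 0 → ∑ j, (((n.factorial : ℝ)⁻¹) • (s • Q) ^ n) i j = 0 := by
    intro n hn
    obtain ⟨m, rfl⟩ := Nat.exists_eq_succ_of_ne_zero hn
    have : ((s • Q) ^ (m+1)) *ᵥ 1 = 0 := by
      rw [pow_succ, ← mulVec_mulVec, h0, mulVec_zero]
    have := congrFun this i
    simp [mulVec, dotProduct] at this
    simp only [Nat.succ_eq_add_one, Matrix.smul_apply, smul_eq_mul, ← Finset.mul_sum]
    rw [this, mul_zero]
  have h4 := h2.unique (hasSum_single 0 h3)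
  simp [mulVec, dotProduct, h4, one_apply]

lemma growth {E : Type*} [Fintype E] [DecidableEq E] (A B : Matrix E E ℝ)
    (π : E → ℝ) (hπpos : ∀ i, 0 < π i) (L : ℝ)
    (hL : ∀ f : E → ℝ, ∑ i, π i * (((B + A) *ᵥ f) i * f i) ≤ L * ∑ i, π i * f i ^ 2)
    (η : ℝ) (hη : 0 < η) :
    ∀ᶠ s : ℝ in nhds 0, 0 ≤ s → ∀ f : E → ℝ,
      ∑ i, π i * (((NormedSpace.exp (s • B) * NormedSpace.exp (s • A)) *ᵥ f) i) ^ 2 ≤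
        Real.exp (s * (2 * L + η)) * ∑ i, π i * f i ^ 2 := by
  set M : ℝ → Matrix E E ℝ := fun s => NormedSpace.exp (s • B) * NormedSpace.exp (s • A) with hM
  set D : Matrix E E ℝ := B + A with hD
  have hM0 : M 0 = 1 := by simp [hM]
  set G : E → E → ℝ → ℝ := fun i j s => ∑ l, π l * (M s l i * M s l j) with hG
  set G' : E → E → ℝ := fun i j =>
    ∑ l, π l * (D l i * (1 : Matrix E E ℝ) l j + (1 : Matrix E E ℝ) l i * D l j) with hG'
  have hder : ∀ i j, HasDerivAt (G i j) (G' i j) 0 := by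
    intro i j
    apply HasDerivAt.fun_sum
    intro l _
    apply HasDerivAt.const_mul
    have := (deriv_entry A B l i).mul (deriv_entry A B l j)
    have e1 : (NormedSpace.exp ((0:ℝ) • B) * NormedSpace.exp ((0:ℝ) • A)) = (1 : Matrix E E ℝ) := hM0
    rw [e1] at this
    exact this
  set K : ℝ := ∑ i, 1 / π i with hK
  have hK0 : 0 ≤ K := Finset.sum_nonneg fun i _ => (div_pos one_pos (hπpos i)).le
  set η1 := η / (K + 1) with hη1
  have hη1p : 0 < η1 := by positivity
  have hη1K : η1 * K ≤ η := by
    rw [hη1, div_mul_eq_mul_div, div_le_iff₀ (by positivity)]; nlinarith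
  have hev : ∀ᶠ s : ℝ in nhds 0, ∀ i j, |G i j s - G i j 0 - s * G' i j| ≤ η1 * |s| := by
    rw [eventually_all]; intro i
    rw [eventually_all]; intro j
    have := (hasDerivAt_iff_isLittleO.1 (hder i j)).def hη1p
    filter_upwards [this] with s hs
    simpa using hs
  filter_upwards [hev] with s hs hs0 f
  have hsum : ∀ r, ∑ i, π i * ((M r *ᵥ f) i) ^ 2 = ∑ i, ∑ j, f i * f j * G i j r := by
    intro r
    have e : ∀ l, π l * ((M r *ᵥ f) l) ^ 2 =
        ∑ i, ∑ j, f i * f j * (π l * (M r l i * M r l j)) := by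
      intro l
      simp only [mulVec, dotProduct]
      rw [sq, Finset.sum_mul_sum, Finset.mul_sum]
      refine Finset.sum_congr rfl fun i _ => ?_
      rw [Finset.mul_sum]
      exact Finset.sum_congr rfl fun j _ => by ring
    simp_rw [e]
    rw [Finset.sum_comm]
    refine Finset.sum_congr rfl fun i _ => ?_
    rw [Finset.sum_comm]
    refine Finset.sum_congr rfl fun j _ => ?_
    rw [hG, Finset.mul_sum]
  have hG'sum : ∑ i, ∑ j, f i * f j * G' i j = 2 * ∑ i, π i * ((D *ᵥ f) i * f i) := by
    have e1 : ∀ i j, G' i j = π j * D j i + π i * D i j := by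
      intro i j
      simp [hG', mul_add, Finset.sum_add_distrib, one_apply]
    simp_rw [e1, mul_add, Finset.sum_add_distrib]
    rw [Finset.sum_comm, two_mul]
    have e2 : ∀ i, π i * ((D *ᵥ f) i * f i) = ∑ j, f i * f j * (π i * D i j) := by
      intro i
      simp only [mulVec, dotProduct]
      rw [Finset.sum_mul, Finset.mul_sum]
      exact Finset.sum_congr rfl fun j _ => by ring
    simp_rw [e2]
    congr 1
    exact Finset.sum_congr rfl fun i _ => Finset.sum_congr rfl fun j _ => by ring
  set S := ∑ i, π i * f i ^ 2 with hS
  have hS0 : 0 ≤ S := Finset.sum_nonneg fun i _ => mul_nonneg (hπpos i).le (sq_nonneg _)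
  have h0 : ∑ i, ∑ j, f i * f j * G i j 0 = S := by
    rw [← hsum 0, hM0]; simp [hS]
  have habs : (∑ i, |f i|) ^ 2 ≤ K * S := by
    apply Finset.sum_sq_le_sum_mul_sum_of_sq_le_mul
    · intro i _; exact (div_pos one_pos (hπpos i)).le
    · intro i _; exact mul_nonneg (hπpos i).le (sq_nonneg _)
    · intro i _
      have := (hπpos i).ne'
      apply le_of_eq
      rw [sq_abs]
      field_simp
  have hmain : ∑ i, ∑ j, f i * f j * G i j s ≤ ∑ i, ∑ j, f i * f j * G i j 0
      + s * ∑ i, ∑ j, f i * f j * G' i j + η1 * s * (∑ i, |f i|) ^ 2 := by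
    rw [sq, Finset.sum_mul_sum]
    simp_rw [Finset.mul_sum, ← Finset.sum_add_distrib]
    refine Finset.sum_le_sum fun i _ => Finset.sum_le_sum fun j _ => ?_
    have h1 := hs i j
    rw [abs_of_nonneg hs0] at h1
    have h2 : f i * f j * (G i j s - G i j 0 - s * G' i j) ≤ (|f i| * |f j|) * (η1 * s) := by
      refine (le_abs_self _).trans ?_
      rw [abs_mul, abs_mul]
      exact mul_le_mul_of_nonneg_left h1 (by positivity)
    linarith
  have hexp : 1 + s * (2 * L + η) ≤ Real.exp (s * (2 * L + η)) := by
    linarith [Real.add_one_le_exp (s * (2 * L + η))]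
  have hfin := hsum s
  rw [hfin]
  rw [h0, hG'sum] at hmain
  have hLf := hL f
  calc _ ≤ S + s * (2 * (L * S)) + η1 * s * (K * S) := by
        refine hmain.trans ?_
        gcongr
    _ = S + s * (2 * (L * S)) + (η1 * K) * (s * S) := by ring
    _ ≤ S + s * (2 * (L * S)) + η * (s * S) := by gcongr
    _ = (1 + s * (2 * L + η)) * S := by ring
    _ ≤ _ := mul_le_mul_of_nonneg_right hexp hS0

lemma iter_growth {E : Type*} [Fintype E] [DecidableEq E] (M : Matrix E E ℝ)
    (π : E → ℝ) (c : ℝ) (hc : 0 ≤ c)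
    (h : ∀ f : E → ℝ, ∑ i, π i * ((M *ᵥ f) i) ^ 2 ≤ c * ∑ i, π i * f i ^ 2) (n : ℕ)
    (f : E → ℝ) : ∑ i, π i * (((M ^ n) *ᵥ f) i) ^ 2 ≤ c ^ n * ∑ i, π i * f i ^ 2 := by
  induction n with
  | zero => simp
  | succ n ih =>
    rw [pow_succ', ← mulVec_mulVec]
    refine (h _).trans ?_
    rw [pow_succ', mul_assoc]
    exact mul_le_mul_of_nonneg_left ih hc

lemma prob_bound {E : Type*} [Fintype E] [DecidableEq E] [MeasurableSpace E]
    (p : Measure (ℕ → E)) [IsProbabilityMeasure p] (P : Matrix E E ℝ) (hP : ∀ i j, 0 ≤ P i j)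
    (π : E → ℝ) (hπ : ∀ i, 0 < π i)
    (hp : ∀ (m : ℕ) (x : ℕ → E), p {ω | ∀ l ≤ m, ω l = x l} =
        ENNReal.ofReal (π (x 0) * ∏ l ∈ Finset.range m, P (x l) (x (l + 1))))
    (d : E → ℝ) (hd : ∀ i, 0 < d i) (C : ℝ) (hC : 0 ≤ C) (n : ℕ) (S : Set (ℕ → E))
    (hS : ∀ ω ∈ S, 1 ≤ C * ∏ i ∈ Finset.range (n + 1), d (ω i)) :
    (p S).toReal ≤ C * ∑ i, π i * (((diagonal d * P) ^ n) *ᵥ d) i := by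
  classical
  set T : Finset (Fin (n + 1) → E) := Finset.univ.filter (fun y => 1 ≤ C * ∏ i, d (y i)) with hT
  set cyl : (Fin (n + 1) → E) → Set (ℕ → E) :=
    fun y => {ω | ∀ l ≤ n, ω l = y (Fin.ofNat (n + 1) l)} with hcyl
  have hcoe : ∀ l : Fin (n + 1), Fin.ofNat (n + 1) (l : ℕ) = l := by
    intro l; ext; simp
  have hsub : S ⊆ ⋃ y ∈ T, cyl y := by
    intro ω hω
    simp only [Set.mem_iUnion]
    refine ⟨fun i => ω i, ?_, ?_⟩
    · simp only [hT, Finset.mem_filter, Finset.mem_univ, true_and]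
      have := hS ω hω
      rwa [Finset.prod_range] at this
    · intro l hl
      simp [Nat.mod_eq_of_lt (Nat.lt_succ_of_le hl)]
  have hpc : ∀ y, p.real (cyl y) = π (y 0) * ∏ l : Fin n, P (y l.castSucc) (y l.succ) := by
    intro y
    have h1 := hp n (fun l => y (Fin.ofNat (n + 1) l))
    rw [Measure.real, hcyl, h1, ENNReal.toReal_ofReal]
    · rw [Finset.prod_range]
      have e0 : Fin.ofNat (n + 1) 0 = 0 := hcoe 0
      rw [e0]
      congr 1
      refine Finset.prod_congr rfl fun l _ => ?_
      have e1 := hcoe l.castSucc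
      have e2 := hcoe l.succ
      simp only [Fin.val_castSucc, Fin.val_succ] at e1 e2
      rw [e1, e2]
    · exact mul_nonneg (hπ _).le (Finset.prod_nonneg fun l _ => hP _ _)
  have h1 : (p S).toReal ≤ ∑ y ∈ T, p.real (cyl y) :=
    (measureReal_mono hsub (measure_ne_top _ _)).trans (measureReal_biUnion_finset_le T cyl)
  refine h1.trans ?_
  rw [← path_sum, Finset.mul_sum]
  have hnn : ∀ y : Fin (n + 1) → E, 0 ≤ p.real (cyl y) := fun y => measureReal_nonneg
  have hterm : ∀ y : Fin (n + 1) → E, C * (π (y 0) *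
      ((∏ l : Fin n, (diagonal d * P) (y l.castSucc) (y l.succ)) * d (y (Fin.last n)))) =
      p.real (cyl y) * (C * ∏ i, d (y i)) := by
    intro y
    rw [hpc, Fin.prod_univ_castSucc]
    simp only [diagonal_mul, Finset.prod_mul_distrib]
    ring
  simp_rw [hterm]
  calc _ ≤ ∑ y ∈ T, p.real (cyl y) * (C * ∏ i, d (y i)) := by
        refine Finset.sum_le_sum fun y hy => ?_
        simp only [hT, Finset.mem_filter, Finset.mem_univ, true_and] at hy
        exact le_mul_of_one_le_right (hnn y) hy
    _ ≤ _ := by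
        refine Finset.sum_le_sum_of_subset_of_nonneg (Finset.subset_univ _) fun y _ _ => ?_
        exact mul_nonneg (hnn y) (mul_nonneg hC (Finset.prod_nonneg fun i _ => (hd _).le))

end CtmcH

/-- Hoeffding's inequality for a finite-state irreducible continuous-time Markov chain,
expressed through its `δ`-skeleton chains: the limsup over `k` of the deviation
probabilities of the `t/k`-skeleton chains is bounded by `exp(-λ(Q) t ε² /(b-a)²)`. -/
theorem finite_ctmc_skeleton_hoeffding
    {E : Type*} [Fintype E] [DecidableEq E] [Nonempty E]
    [MeasurableSpace E] [DiscreteMeasurableSpace E]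
    (Q : Matrix E E ℝ)
    (hQoff : ∀ i j, i ≠ j → 0 ≤ Q i j) (hQrow : ∀ i, ∑ j, Q i j = 0)
    -- irreducibility of the Q-matrix
    (hirr : ∀ i j, i ≠ j → ∃ m, ∃ c : Fin (m + 1) → E,
      c 0 = i ∧ c (Fin.last m) = j ∧ ∀ l : Fin m, 0 < Q (c l.castSucc) (c l.succ))
    (π : E → ℝ) (hπpos : ∀ i, 0 < π i) (hπ1 : ∑ i, π i = 1)
    (hinv : ∀ j, ∑ i, π i * Q i j = 0)
    (t : ℝ) (ht : 0 < t) (ε : ℝ) (hε : 0 < ε)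
    (g : E → ℝ) (a b : ℝ) (hab : a < b) (hg : ∀ i, a ≤ g i ∧ g i ≤ b)
    -- for each `k ≥ 1`, `μ k` is the law of the Markov chain with one-step transition
    -- matrix `P^{t/k} = exp((t/k)Q)` and initial distribution `π`, characterized by its
    -- finite-dimensional (cylinder) distributions
    (μ : ℕ → Measure (ℕ → E)) (hprob : ∀ k, IsProbabilityMeasure (μ k))
    (hμ : ∀ k, 1 ≤ k → ∀ (m : ℕ) (x : ℕ → E),
      μ k {ω | ∀ l ≤ m, ω l = x l} =
        ENNReal.ofReal (π (x 0) *
          ∏ l ∈ Finset.range m,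
            NormedSpace.exp ((t / (k : ℝ)) • Q) (x l) (x (l + 1)))) :
    limsup (fun k : ℕ =>
        (μ k {ω | (k : ℝ)⁻¹ * ∑ i ∈ Finset.range k, g (ω i) - ∑ i, π i * g i ≥ ε}).toReal)
      atTop ≤
      Real.exp (-(sInf {c : ℝ | ∃ f : E → ℝ,
          Real.sqrt (∑ i, π i * f i ^ 2) = 1 ∧ (∑ i, π i * f i) = 0 ∧
          c = -(∑ i, π i * ((∑ j, Q i j * f j) * f i))} * t * ε ^ 2 / (b - a) ^ 2)) := by
  set lam : ℝ := sInf {c : ℝ | ∃ f : E → ℝ,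
          Real.sqrt (∑ i, π i * f i ^ 2) = 1 ∧ (∑ i, π i * f i) = 0 ∧
          c = -(∑ i, π i * ((∑ j, Q i j * f j) * f i))} with hlam
  have hd0 : 0 < b - a := sub_pos.2 hab
  have hcob : IsCoboundedUnder (· ≤ ·) atTop (fun k : ℕ =>
      (μ k {ω | (k : ℝ)⁻¹ * ∑ i ∈ Finset.range k, g (ω i) - ∑ i, π i * g i ≥ ε}).toReal) :=
    isCoboundedUnder_le_of_le atTop (x := 0) fun k => ENNReal.toReal_nonneg
  rcases le_or_gt lam 0 with hl | hl
  · refine (limsup_le_of_le hcob (a := 1) (Eventually.of_forall fun k => ?_)).trans ?_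
    · haveI := hprob k
      exact measureReal_le_one
    · apply Real.one_le_exp
      rw [Left.nonneg_neg_iff]
      apply div_nonpos_of_nonpos_of_nonneg _ (sq_nonneg _)
      exact mul_nonpos_of_nonpos_of_nonneg (mul_nonpos_of_nonpos_of_nonneg hl ht.le) (sq_nonneg _)
  set m := ∑ i, π i * g i with hm
  by_cases hex : ∃ i, m + ε ≤ g i
  swap
  · push Not at hex
    refine (limsup_le_of_le hcob (a := 0) ?_).trans (Real.exp_pos _).le
    filter_upwards [eventually_ge_atTop 1] with k hk
    have hk' : (0 : ℝ) < k := by exact_mod_cast hk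
    have : {ω : ℕ → E | (k : ℝ)⁻¹ * ∑ i ∈ Finset.range k, g (ω i) - m ≥ ε} = ∅ := by
      ext ω
      simp only [Set.mem_setOf_eq, Set.mem_empty_iff_false, iff_false, ge_iff_le, not_le]
      have h1 : ∑ i ∈ Finset.range k, g (ω i) < ∑ i ∈ Finset.range k, (m + ε) :=
        Finset.sum_lt_sum_of_nonempty (by simpa using (by omega : k ≠ 0)) fun i _ => hex _
      rw [Finset.sum_const, Finset.card_range, nsmul_eq_mul] at h1
      have h2 : (k : ℝ)⁻¹ * ∑ i ∈ Finset.range k, g (ω i) < m + ε := by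
        rw [inv_mul_lt_iff₀ hk']; exact h1
      linarith
    rw [this]; simp
  obtain ⟨i₀, hi₀⟩ := hex
  have hma : a ≤ m := by
    calc a = ∑ i, π i * a := by rw [← Finset.sum_mul, hπ1, one_mul]
      _ ≤ m := Finset.sum_le_sum fun i _ => mul_le_mul_of_nonneg_left (hg i).1 (hπpos i).le
  have ham : a < m := by
    calc a = ∑ i, π i * a := by rw [← Finset.sum_mul, hπ1, one_mul]
      _ < m := Finset.sum_lt_sum
        (fun i _ => mul_le_mul_of_nonneg_left (hg i).1 (hπpos i).le)
        ⟨i₀, Finset.mem_univ _, mul_lt_mul_of_pos_left (by linarith) (hπpos i₀)⟩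
  have hmb : m < b := by linarith [(hg i₀).2]
  set θ : ℝ := 2 * lam * ε / (b - a) ^ 2 with hθ
  have hθ0 : 0 < θ := by positivity
  set h : E → ℝ := fun i => g i - m with hh
  have hmean : ∑ i, π i * h i = 0 := by
    simp only [hh, mul_sub, Finset.sum_sub_distrib]
    rw [← Finset.sum_mul, hπ1, one_mul, ← hm, sub_self]
  set L : ℝ := θ ^ 2 * (b - a) ^ 2 / (4 * lam) with hL
  have hexpo : L - θ * ε = -(lam * ε ^ 2 / (b - a) ^ 2) := by
    rw [hL, hθ]; field_simp; ring
  set B : Matrix E E ℝ := diagonal (fun i => θ * h i) with hB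
  have hquad : ∀ f : E → ℝ, ∑ i, π i * (((B + Q) *ᵥ f) i * f i) ≤ L * ∑ i, π i * f i ^ 2 := by
    intro f
    have h1 := CtmcH.gap Q hQrow π hπpos hπ1 hinv lam hl hlam f
    have h2 := CtmcH.key_ineq π hπpos hπ1 lam θ (a - m) (b - m) hl hθ0 h (by linarith)
      (by linarith) (fun i => ⟨by simp only [hh]; linarith [(hg i).1],
        by simp only [hh]; linarith [(hg i).2]⟩) hmean f
    have e : b - m - (a - m) = b - a := by ring
    rw [e, ← hL] at h2
    have h3 : ∑ i, π i * (((B + Q) *ᵥ f) i * f i) =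
        ∑ i, π i * ((∑ j, Q i j * f j) * f i) + θ * ∑ i, π i * (h i * f i ^ 2) := by
      rw [Finset.mul_sum, ← Finset.sum_add_distrib]
      refine Finset.sum_congr rfl fun i _ => ?_
      rw [add_mulVec, Pi.add_apply, hB, mulVec_diagonal]
      simp only [mulVec, dotProduct]
      ring
    rw [h3]; linarith
  -- eventual bound
  have hmain : ∀ η : ℝ, 0 < η → limsup (fun k : ℕ =>
      (μ k {ω | (k : ℝ)⁻¹ * ∑ i ∈ Finset.range k, g (ω i) - m ≥ ε}).toReal) atTop ≤
      Real.exp (t * (L - θ * ε) + t * η) := by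
    intro η hη
    refine limsup_le_of_le hcob ?_
    have hgr := CtmcH.growth Q B π hπpos L hquad (2 * η) (by positivity)
    have htend : Tendsto (fun k : ℕ => t / (k : ℝ)) atTop (nhds 0) :=
      tendsto_const_div_atTop_nhds_zero_nat t
    filter_upwards [htend.eventually hgr, eventually_ge_atTop 1] with k hk hk1
    haveI := hprob k
    have hk' : (0 : ℝ) < k := by exact_mod_cast hk1
    set δ : ℝ := t / (k : ℝ) with hδ
    have hδ0 : 0 < δ := by positivity
    have hkδ : (k : ℝ) * δ = t := by rw [hδ]; field_simp
    specialize hk hδ0.le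
    set d : E → ℝ := fun i => Real.exp (δ * (θ * h i)) with hd
    have hexpB : NormedSpace.exp (δ • B) = diagonal d := by
      rw [hB, ← diagonal_smul, Matrix.exp_diagonal]
      congr 1
      ext i
      rw [Pi.coe_exp, ← Real.exp_eq_exp_ℝ]
      rfl
    rw [hexpB] at hk
    obtain ⟨n, rfl⟩ : ∃ n, k = n + 1 := ⟨k - 1, by omega⟩
    set P := NormedSpace.exp (δ • Q) with hP
    set M := diagonal d * P with hM
    have hb := CtmcH.prob_bound (μ (n + 1)) P (CtmcH.exp_nonneg Q hQoff δ hδ0.le) π hπpos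
      (hμ (n + 1) hk1) d (fun i => Real.exp_pos _) (Real.exp (-(θ * t * ε))) (Real.exp_pos _).le n
      {ω | (((n + 1 : ℕ) : ℝ))⁻¹ * ∑ i ∈ Finset.range (n + 1), g (ω i) - m ≥ ε} ?_
    · refine hb.trans ?_
      have hd1 : d = M *ᵥ 1 := by
        rw [hM, ← mulVec_mulVec, hP, CtmcH.exp_one_vec Q hQrow]
        ext i
        rw [mulVec_diagonal]; simp
      rw [← hM]
      have hpow : (M ^ n) *ᵥ d = (M ^ (n + 1)) *ᵥ 1 := by
        rw [hd1, mulVec_mulVec, ← pow_succ]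
      rw [hpow]
      have hit := CtmcH.iter_growth M π _ (Real.exp_pos _).le hk (n + 1) 1
      set v := (M ^ (n + 1)) *ᵥ (1 : E → ℝ) with hv
      have h1 : ∑ i, π i * (1 : E → ℝ) i ^ 2 = 1 := by simp [hπ1]
      rw [h1, mul_one, ← Real.exp_nat_mul] at hit
      have hCS : (∑ i, π i * v i) ^ 2 ≤ (∑ i, π i) * ∑ i, π i * v i ^ 2 := by
        apply Finset.sum_sq_le_sum_mul_sum_of_sq_le_mul
        · intro i _; exact (hπpos i).le
        · intro i _; exact mul_nonneg (hπpos i).le (sq_nonneg _)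
        · intro i _; apply le_of_eq; ring
      rw [hπ1, one_mul] at hCS
      have hexp2 : Real.exp (((n + 1 : ℕ) : ℝ) * (δ * (2 * L + 2 * η))) =
          Real.exp (t * (L + η)) ^ 2 := by
        rw [← Real.exp_nat_mul]
        congr 1
        rw [← mul_assoc, hkδ]
        push_cast; ring
      rw [hexp2] at hit
      have hle := abs_le_of_sq_le_sq (hCS.trans hit) (Real.exp_pos _).le
      calc _ ≤ Real.exp (-(θ * t * ε)) * Real.exp (t * (L + η)) :=
            mul_le_mul_of_nonneg_left ((le_abs_self _).trans hle) (Real.exp_pos _).le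
        _ = _ := by rw [← Real.exp_add]; congr 1; ring
    · intro ω hω
      rw [← Real.exp_sum, ← Real.exp_add]
      apply Real.one_le_exp
      simp only [Set.mem_setOf_eq, ge_iff_le] at hω
      have h1 : ∑ i ∈ Finset.range (n + 1), δ * (θ * h (ω i)) =
          δ * θ * (∑ i ∈ Finset.range (n + 1), g (ω i) - ((n + 1 : ℕ) : ℝ) * m) := by
        simp only [hh]
        rw [← Finset.mul_sum, ← Finset.mul_sum, Finset.sum_sub_distrib]
        simp [mul_assoc]
      have h2 : ((n + 1 : ℕ) : ℝ) * ε ≤ 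
          ∑ i ∈ Finset.range (n + 1), g (ω i) - ((n + 1 : ℕ) : ℝ) * m := by
        have := mul_le_mul_of_nonneg_left hω hk'.le
        rwa [mul_sub, mul_inv_cancel_left₀ hk'.ne'] at this
      rw [h1]
      have h3 := mul_le_mul_of_nonneg_left h2 (mul_pos hδ0 hθ0).le
      have h4 : δ * θ * (((n + 1 : ℕ) : ℝ) * ε) = θ * t * ε := by
        rw [← hkδ]; ring
      linarith
  have htgt : -(lam * t * ε ^ 2 / (b - a) ^ 2) = t * (L - θ * ε) := by
    rw [hexpo]; ring
  rw [htgt]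
  have hlim : Tendsto (fun η : ℝ => Real.exp (t * (L - θ * ε) + t * η)) (nhdsWithin 0 (Set.Ioi 0))
      (nhds (Real.exp (t * (L - θ * ε)))) := by
    have hc : Continuous (fun η : ℝ => Real.exp (t * (L - θ * ε) + t * η)) := by fun_prop
    have := (hc.tendsto 0).mono_left (nhdsWithin_le_nhds (s := Set.Ioi 0))
    simpa using this
  refine ge_of_tendsto hlim ?_
  filter_upwards [self_mem_nhdsWithin] with η hη
  exact hmain η hη
end

section
/- Let E be a finite set with at least two elements and Q an irreducible Q-matrix on E with invariant probability distribution π, π(i) > 0 for all i. Then the spectral gap is strictly positive: λ(Q) := inf{ −⟨Qf,f⟩_π : f : E → ℝ, ‖f‖_π = 1, π(f) = 0 } > 0. -/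
open Matrix

/-- For a finite state space with at least two elements and an irreducible Q-matrix `Q`
with invariant probability distribution `π` (with `π i > 0`), the `L²(π)`-spectral gap
`λ(Q) = inf { -⟨Qf,f⟩_π : ‖f‖_π = 1, π(f) = 0 }` is strictly positive. -/
theorem finite_spectral_gap_pos
    {E : Type*} [Fintype E] [DecidableEq E] [Nontrivial E]
    (Q : Matrix E E ℝ)
    (hQoff : ∀ i j, i ≠ j → 0 ≤ Q i j) (hQrow : ∀ i, ∑ j, Q i j = 0)
    (hirr : ∀ i j, i ≠ j → ∃ m, ∃ c : Fin (m + 1) → E,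
      c 0 = i ∧ c (Fin.last m) = j ∧ ∀ l : Fin m, 0 < Q (c l.castSucc) (c l.succ))
    (π : E → ℝ) (hπpos : ∀ i, 0 < π i) (hπ1 : ∑ i, π i = 1)
    (hinv : ∀ j, ∑ i, π i * Q i j = 0) :
    0 < sInf {c : ℝ | ∃ f : E → ℝ,
        Real.sqrt (∑ i, π i * f i ^ 2) = 1 ∧ (∑ i, π i * f i) = 0 ∧
        c = -(∑ i, π i * ((∑ j, Q i j * f j) * f i))} := by
  have hid : ∀ f : E → ℝ, ∑ i, ∑ j, π i * Q i j * (f j - f i) ^ 2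
      = 2 * -(∑ i, π i * ((∑ j, Q i j * f j) * f i)) := by
    intro f
    have h1 : ∑ i, ∑ j, π i * Q i j * f j ^ 2 = 0 := by
      rw [Finset.sum_comm]
      refine Finset.sum_eq_zero fun j _ => ?_
      rw [← Finset.sum_mul, hinv, zero_mul]
    have h2 : ∑ i, ∑ j, π i * Q i j * f i ^ 2 = 0 := by
      refine Finset.sum_eq_zero fun i _ => ?_
      rw [← Finset.sum_mul, ← Finset.mul_sum, hQrow, mul_zero, zero_mul]
    have h3 : ∑ i, π i * ((∑ j, Q i j * f j) * f i)
        = ∑ i, ∑ j, π i * Q i j * (f i * f j) := by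
      refine Finset.sum_congr rfl fun i _ => ?_
      rw [Finset.sum_mul, Finset.mul_sum]
      exact Finset.sum_congr rfl fun j _ => by ring
    have h4 : ∑ i, ∑ j, π i * Q i j * (f j - f i) ^ 2
        = ∑ i, ∑ j, π i * Q i j * f j ^ 2 + ∑ i, ∑ j, π i * Q i j * f i ^ 2
          - 2 * ∑ i, ∑ j, π i * Q i j * (f i * f j) := by
      simp only [Finset.mul_sum, ← Finset.sum_add_distrib, ← Finset.sum_sub_distrib]
      exact Finset.sum_congr rfl fun i _ => Finset.sum_congr rfl fun j _ => by ring
    rw [h4, h1, h2, h3]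
    ring
  have hpos : ∀ f : E → ℝ, Real.sqrt (∑ i, π i * f i ^ 2) = 1 → (∑ i, π i * f i) = 0 →
      0 < -(∑ i, π i * ((∑ j, Q i j * f j) * f i)) := by
    intro f hf1 hf0
    by_contra hneg
    have hterm : ∀ i j, 0 ≤ π i * Q i j * (f j - f i) ^ 2 := by
      intro i j
      by_cases hij : i = j
      · subst hij; simp
      · exact mul_nonneg (mul_nonneg (hπpos i).le (hQoff i j hij)) (sq_nonneg _)
    have hrow : ∀ i ∈ Finset.univ, 0 ≤ ∑ j, π i * Q i j * (f j - f i) ^ 2 :=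
      fun i _ => Finset.sum_nonneg fun j _ => hterm i j
    have hsum : ∑ i, ∑ j, π i * Q i j * (f j - f i) ^ 2 = 0 := by
      apply le_antisymm _ (Finset.sum_nonneg hrow)
      rw [hid]; linarith
    have hz : ∀ i j, π i * Q i j * (f j - f i) ^ 2 = 0 := fun i j =>
      (Finset.sum_eq_zero_iff_of_nonneg (fun j _ => hterm i j)).1
        ((Finset.sum_eq_zero_iff_of_nonneg hrow).1 hsum i (Finset.mem_univ i)) j (Finset.mem_univ j)
    have hedge : ∀ i j, 0 < Q i j → f j = f i := by
      intro i j hq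
      have := hz i j
      have hne : π i * Q i j ≠ 0 := (mul_pos (hπpos i) hq).ne'
      have := (mul_eq_zero.1 this).resolve_left hne
      exact sub_eq_zero.1 (pow_eq_zero_iff two_ne_zero |>.1 this)
    have hconst : ∀ i j, f j = f i := by
      intro i j
      by_cases hij : i = j
      · rw [hij]
      · obtain ⟨m, c, h0, hl, hc⟩ := hirr i j hij
        have : ∀ l : Fin (m + 1), f (c l) = f (c 0) := by
          intro l
          induction l using Fin.induction with
          | zero => rfl
          | succ l ih => rw [hedge _ _ (hc l), ih]
        rw [← h0, ← hl, this]
    have hf : ∀ i, f i = 0 := by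
      intro i
      have h : ∑ j, π j * f j = f i := by
        rw [Finset.sum_congr rfl fun j _ => by rw [hconst i j], ← Finset.sum_mul, hπ1, one_mul]
      rw [← h, hf0]
    simp [hf] at hf1
  have hcomp : IsCompact {f : E → ℝ | Real.sqrt (∑ i, π i * f i ^ 2) = 1 ∧
      (∑ i, π i * f i) = 0} := by
    refine IsCompact.of_isClosed_subset
      (isCompact_univ_pi (fun i => isCompact_Icc (a := -(1 + 1 / π i)) (b := 1 + 1 / π i))) ?_ ?_
    · exact (isClosed_eq (by fun_prop) continuous_const).inter
        (isClosed_eq (by fun_prop) continuous_const)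
    · rintro f ⟨hf1, -⟩ i -
      rw [Real.sqrt_eq_one] at hf1
      have hle : π i * f i ^ 2 ≤ 1 := by
        rw [← hf1]
        exact Finset.single_le_sum (f := fun i => π i * f i ^ 2)
          (fun j _ => mul_nonneg (hπpos j).le (sq_nonneg _)) (Finset.mem_univ i)
      have h2 : f i ^ 2 ≤ 1 / π i := by
        rw [le_div_iff₀ (hπpos i)]; linarith
      constructor <;> nlinarith [sq_nonneg (f i - 1), sq_nonneg (f i + 1)]
  have hne : {f : E → ℝ | Real.sqrt (∑ i, π i * f i ^ 2) = 1 ∧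
      (∑ i, π i * f i) = 0}.Nonempty := by
    obtain ⟨a, b, hab⟩ := exists_pair_ne E
    let g : E → ℝ := fun i => (if i = a then 1 / π a else 0) - (if i = b then 1 / π b else 0)
    have hg0 : ∑ i, π i * g i = 0 := by
      simp [g, mul_sub, Finset.sum_sub_distrib, (hπpos a).ne', (hπpos b).ne']
    have hs : 0 < ∑ i, π i * g i ^ 2 := by
      refine Finset.sum_pos' (fun i _ => mul_nonneg (hπpos i).le (sq_nonneg _))
        ⟨a, Finset.mem_univ a, ?_⟩
      have := hπpos a
      simp only [g, if_true, if_neg hab, sub_zero]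
      positivity
    refine ⟨fun i => g i / Real.sqrt (∑ i, π i * g i ^ 2), ?_, ?_⟩
    · rw [Real.sqrt_eq_one]
      simp only [div_pow, Real.sq_sqrt hs.le, ← mul_div_assoc, ← Finset.sum_div]
      exact div_self hs.ne'
    · simp only [← mul_div_assoc, ← Finset.sum_div, hg0, zero_div]
  have himg := (hcomp.image (f := fun f : E → ℝ => -(∑ i, π i * ((∑ j, Q i j * f j) * f i)))
    (by fun_prop)).sInf_mem (hne.image _)
  have hset : {c : ℝ | ∃ f : E → ℝ,
        Real.sqrt (∑ i, π i * f i ^ 2) = 1 ∧ (∑ i, π i * f i) = 0 ∧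
        c = -(∑ i, π i * ((∑ j, Q i j * f j) * f i))} =
      (fun f : E → ℝ => -(∑ i, π i * ((∑ j, Q i j * f j) * f i))) ''
        {f : E → ℝ | Real.sqrt (∑ i, π i * f i ^ 2) = 1 ∧ (∑ i, π i * f i) = 0} := by
    ext c
    constructor
    · rintro ⟨f, h1, h2, h3⟩
      exact ⟨f, ⟨h1, h2⟩, h3.symm⟩
    · rintro ⟨f, ⟨h1, h2⟩, h3⟩
      exact ⟨f, h1, h2, h3.symm⟩
  rw [hset]
  obtain ⟨f, ⟨h1, h2⟩, h3⟩ := himg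
  rw [← h3]
  exact hpos f h1 h2
end

section
/- Let E be a countably infinite set, Q a Q-matrix on E with q(i) := −Q(i,i) < ∞ for all i, and π an invariant probability distribution for Q with π(i) > 0 for all i and ∑_{i∈E} π(i)Q(i,j) = 0 (the off-diagonal part converging absolutely) for every j. Let F ⊂ E be a finite nonempty subset with π(F^C) > 0, let e denote a new single-point state representing F^C, and define the collapsed matrix Q̃ on F ∪ {e} by: Q̃(i,j) = Q(i,j) for i,j ∈ F; Q̃(i,e) = ∑_{k∈F^C} Q(i,k) for i ∈ F; Q̃(e,i) = (∑_{k∈F^C} π(k)Q(k,i)) / (∑_{k∈F^C} π(k)) for i ∈ F; and Q̃(e,e) = −∑_{k∈F} Q̃(e,k). Define π̃ on F ∪ {e} by π̃(i) = π(i) for i ∈ F and π̃(e) = ∑_{k∈F^C} π(k). Then Q̃ is a Q-matrix on the finite set F ∪ {e} and π̃ is invariant for Q̃: ∑_{x∈F∪{e}} π̃(x)Q̃(x,y) = 0 for every y ∈ F ∪ {e}. -/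
/-- The collapsed Q-matrix on `F ∪ {e}` obtained from a Q-matrix `Q` on `E` with
invariant distribution `π` by collapsing the complement `F^C` to the single state
`e = none`. -/
noncomputable def collapsedQ {E : Type*} (Q : E → E → ℝ) (π : E → ℝ) (F : Finset E) :
    Option {i // i ∈ F} → Option {i // i ∈ F} → ℝ
  | some i, some j => Q i j
  | some i, none => ∑' k : {k : E // k ∉ F}, Q i k
  | none, some j =>
      (∑' k : {k : E // k ∉ F}, π k * Q k j) / ∑' k : {k : E // k ∉ F}, π k
  | none, none =>
      -∑ j : {i // i ∈ F},
        (∑' k : {k : E // k ∉ F}, π (k : E) * Q k j) / ∑' k : {k : E // k ∉ F}, π k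

/-- The collapsed distribution on `F ∪ {e}`. -/
noncomputable def collapsedPi {E : Type*} (π : E → ℝ) (F : Finset E) :
    Option {i // i ∈ F} → ℝ
  | some i => π i
  | none => ∑' k : {k : E // k ∉ F}, π k

/-- The collapsed matrix `Q̃` is a Q-matrix on the finite set `F ∪ {e}` and the collapsed
distribution `π̃` is invariant for `Q̃`. -/
theorem collapsed_Qmatrix_invariant
    {E : Type*} [Countable E] [Infinite E] [DecidableEq E]
    (Q : E → E → ℝ)
    (hQoff : ∀ i j, i ≠ j → 0 ≤ Q i j)
    (hQsumm : ∀ i, Summable (Q i)) (hQrow : ∀ i, ∑' j, Q i j = 0)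
    (π : E → ℝ) (hπpos : ∀ i, 0 < π i) (hπsumm : Summable π) (hπ1 : ∑' i, π i = 1)
    (hinvsumm : ∀ j, Summable fun i => π i * Q i j)
    (hinv : ∀ j, ∑' i, π i * Q i j = 0)
    (F : Finset E) (hF : F.Nonempty) (hFc : 0 < ∑' k : {k : E // k ∉ F}, π k) :
    (∀ x y, x ≠ y → 0 ≤ collapsedQ Q π F x y) ∧
    (∀ x, ∑ y, collapsedQ Q π F x y = 0) ∧
    (∀ y, ∑ x, collapsedPi π F x * collapsedQ Q π F x y = 0) := by
  have split : ∀ f : E → ℝ, Summable f →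
      ∑' k : {k : E // k ∉ F}, f k = ∑' i, f i - ∑ i : {i // i ∈ F}, f i := by
    intro f hf
    have h := hf.sum_add_tsum_subtype_compl F
    rw [← Finset.sum_coe_sort F f] at h
    linarith
  have hrow : ∀ i, ∑' k : {k : E // k ∉ F}, Q i k = - ∑ j : {i // i ∈ F}, Q i j := by
    intro i
    rw [split _ (hQsumm i), hQrow]
    ring
  have hcol : ∀ j, ∑' k : {k : E // k ∉ F}, π k * Q k j
      = - ∑ i : {i // i ∈ F}, π i * Q i j := by
    intro j
    rw [split (fun i => π i * Q i j) (hinvsumm j), hinv]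
    ring
  refine ⟨?_, ?_, ?_⟩
  · rintro (_ | i) (_ | j) hxy
    · exact absurd rfl hxy
    · refine div_nonneg (tsum_nonneg fun k => mul_nonneg (hπpos _).le (hQoff _ _ ?_)) hFc.le
      intro h
      exact k.2 (h ▸ j.2)
    · refine tsum_nonneg fun k => hQoff _ _ ?_
      intro h
      exact k.2 (h ▸ i.2)
    · refine hQoff _ _ fun h => hxy ?_
      rw [Subtype.ext h]
  · rintro (_ | i)
    · simp [Fintype.sum_option, collapsedQ]
    · simp only [Fintype.sum_option, collapsedQ, hrow]
      ring
  · have hP := hFc.ne'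
    rintro (_ | j)
    · simp only [Fintype.sum_option, collapsedQ, collapsedPi, hrow, hcol]
      rw [← Finset.sum_div, mul_neg, mul_div_cancel₀ _ hP]
      simp only [Finset.sum_neg_distrib, mul_neg, neg_neg, Finset.mul_sum]
      rw [Finset.sum_comm]
      ring
    · simp only [Fintype.sum_option, collapsedQ, collapsedPi, hcol]
      rw [mul_div_cancel₀ _ hP]
      ring
end

section
/- Let E be a countably infinite set, Q a Q-matrix on E with q(i) := −Q(i,i) < ∞, and π an invariant probability distribution for Q with π(i) > 0 for all i. Let F ⊂ E be a finite nonempty subset with π(F^C) > 0, and let Q̃, π̃ on the finite set F ∪ {e} be the collapsed matrix and collapsed distribution associated with F. Define the Dirichlet forms D*(f) := (1/2)∑_{i,j∈E} π(i)Q(i,j)(f(j)−f(i))² for f : E → ℝ, and D̃*(g) := (1/2)∑_{x,y∈F∪{e}} π̃(x)Q̃(x,y)(g(y)−g(x))² for g : F ∪ {e} → ℝ. Let f : E → ℝ be constant, equal to d, on F^C, and let f̃ : F ∪ {e} → ℝ be given by f̃(i) = f(i) for i ∈ F and f̃(e) = d. Then: (i) D*(f) = D̃*(f̃); (ii) π(f)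 = π̃(f̃) and ‖f‖_π = ‖f̃‖_{π̃}; in particular π(f) = 0 and ‖f‖_π = 1 hold if and only if π̃(f̃) = 0 and ‖f̃‖_{π̃} = 1. -/
/-- The collapsed function on `F ∪ {e}` associated with a function `f` on `E` which is
constant equal to `d` on `F^C`. -/
def collapsedFun {E : Type*} (f : E → ℝ) (d : ℝ) (F : Finset E) :
    Option {i // i ∈ F} → ℝ
  | some i => f i
  | none => d

theorem split_tsum_aux {E : Type*} (F : Finset E) (u : E → ℝ)
    (h : Summable fun k : {k : E // k ∉ F} => u k) :
    Summable u ∧ ∑' i, u i = ∑ i : {i // i ∈ F}, u i + ∑' k : {k : E // k ∉ F}, u k := by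
  have hs : Summable u := (Finset.summable_compl_iff F).1 h
  refine ⟨hs, ?_⟩
  rw [← hs.sum_add_tsum_subtype_compl F, ← Finset.sum_coe_sort F u]

/-- For a function `f` constant on `F^C`, the Dirichlet form, the mean and the `L²`-norm
are preserved by collapsing: `D*(f) = D̃*(f̃)`, `π(f) = π̃(f̃)` and `‖f‖_π = ‖f̃‖_π̃`;
in particular `π(f) = 0, ‖f‖_π = 1` holds iff `π̃(f̃) = 0, ‖f̃‖_π̃ = 1`. -/
theorem collapsed_dirichlet_form_eq
    {E : Type*} [Countable E] [Infinite E] [DecidableEq E]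
    (Q : E → E → ℝ)
    (hQoff : ∀ i j, i ≠ j → 0 ≤ Q i j)
    (hQsumm : ∀ i, Summable (Q i)) (hQrow : ∀ i, ∑' j, Q i j = 0)
    (π : E → ℝ) (hπpos : ∀ i, 0 < π i) (hπsumm : Summable π) (hπ1 : ∑' i, π i = 1)
    (hinvsumm : ∀ j, Summable fun i => π i * Q i j)
    (hinv : ∀ j, ∑' i, π i * Q i j = 0)
    (F : Finset E) (hF : F.Nonempty) (hFc : 0 < ∑' k : {k : E // k ∉ F}, π k)
    (d : ℝ) (f : E → ℝ) (hf : ∀ i ∉ F, f i = d) :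
    -- (i) the Dirichlet forms agree
    ((1 / 2) * ∑' p : E × E, π p.1 * Q p.1 p.2 * (f p.2 - f p.1) ^ 2 =
      (1 / 2) * ∑ x, ∑ y,
        collapsedPi π F x * collapsedQ Q π F x y *
          (collapsedFun f d F y - collapsedFun f d F x) ^ 2) ∧
    -- (ii) means and norms agree
    ((∑' i, π i * f i) = ∑ x, collapsedPi π F x * collapsedFun f d F x) ∧
    (Real.sqrt (∑' i, π i * f i ^ 2) =
      Real.sqrt (∑ x, collapsedPi π F x * collapsedFun f d F x ^ 2)) ∧
    (((∑' i, π i * f i) = 0 ∧ Real.sqrt (∑' i, π i * f i ^ 2) = 1) ↔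
      ((∑ x, collapsedPi π F x * collapsedFun f d F x) = 0 ∧
        Real.sqrt (∑ x, collapsedPi π F x * collapsedFun f d F x ^ 2) = 1)) := by
  have hmean : ∀ g : E → ℝ, ∀ c : ℝ, (∀ i ∉ F, g i = c) →
      ∑' i, π i * g i = ∑ i : {i // i ∈ F}, π i * g i + (∑' k : {k : E // k ∉ F}, π k) * c := by
    intro g c hg
    have e : (fun k : {k : E // k ∉ F} => π k * g k) = fun k : {k : E // k ∉ F} => π k * c := by
      funext k; rw [hg k k.2]
    have hs : Summable fun k : {k : E // k ∉ F} => π k := hπsumm.subtype _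
    rw [(split_tsum_aux F (fun i => π i * g i) (by
      show Summable (fun k : {k : E // k ∉ F} => π k * g k)
      rw [e]; exact hs.mul_right c)).2, e, tsum_mul_right]
  have h1 : (∑' i, π i * f i) = ∑ x, collapsedPi π F x * collapsedFun f d F x := by
    rw [hmean f d hf, Fintype.sum_option, add_comm]; rfl
  have h2 : (∑' i, π i * f i ^ 2) = ∑ x, collapsedPi π F x * collapsedFun f d F x ^ 2 := by
    rw [hmean (fun i => f i ^ 2) (d ^ 2) (fun i hi => by rw [hf i hi]),
      Fintype.sum_option, add_comm]; rfl
  refine ⟨?_, h1, by rw [h2], by rw [h1, h2]⟩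
  congr 1
  set G : E → E → ℝ := fun i j => π i * Q i j * (f j - f i) ^ 2 with hG
  have hG0 : ∀ i j, 0 ≤ G i j := by
    intro i j
    by_cases hij : i = j
    · subst hij; simp [hG]
    · exact mul_nonneg (mul_nonneg (hπpos i).le (hQoff i j hij)) (sq_nonneg _)
  have hrow : ∀ i, Summable (G i) ∧ ∑' j, G i j = ∑ j : {j // j ∈ F}, G i j +
      π i * (∑' k : {k : E // k ∉ F}, Q i k) * (d - f i) ^ 2 := by
    intro i
    have e : (fun k : {k : E // k ∉ F} => G i k) =
        fun k : {k : E // k ∉ F} => π i * Q i k * (d - f i) ^ 2 := by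
      funext k; simp only [hG]; rw [hf k k.2]
    have hs : Summable fun k : {k : E // k ∉ F} => Q i k := (hQsumm i).subtype _
    have := split_tsum_aux F (G i) (by rw [e]; exact (hs.mul_left _).mul_right _)
    refine ⟨this.1, ?_⟩
    rw [this.2, e, tsum_mul_right, tsum_mul_left]
  have hcol : ∀ j : {j // j ∈ F}, HasSum (fun k : {k : E // k ∉ F} => G k j)
      ((∑' k : {k : E // k ∉ F}, π k * Q k j) * (f j - d) ^ 2) := by
    intro j
    have e : (fun k : {k : E // k ∉ F} => G k j) =
        fun k : {k : E // k ∉ F} => π k * Q k j * (f j - d) ^ 2 := by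
      funext k; simp only [hG]; rw [hf k k.2]
    have hs : Summable fun k : {k : E // k ∉ F} => π k * Q k j := (hinvsumm j).subtype _
    rw [e]
    exact hs.hasSum.mul_right _
  have hR : HasSum (fun k : {k : E // k ∉ F} => ∑' j, G k j)
      (∑ j : {j // j ∈ F}, (∑' k : {k : E // k ∉ F}, π k * Q k j) * (f j - d) ^ 2) := by
    have e : (fun k : {k : E // k ∉ F} => ∑' j, G k j) =
        fun k : {k : E // k ∉ F} => ∑ j : {j // j ∈ F}, G k j := by
      funext k; rw [(hrow k).2, hf k k.2]; simp
    rw [e]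
    exact hasSum_sum fun j _ => hcol j
  have hsp := split_tsum_aux F (fun i => ∑' j, G i j) hR.summable
  have hsum : Summable fun p : E × E => G p.1 p.2 :=
    (summable_prod_of_nonneg (fun p => hG0 p.1 p.2)).2 ⟨fun i => (hrow i).1, hsp.1⟩
  have hP : (∑' k : {k : E // k ∉ F}, π k) ≠ 0 := hFc.ne'
  calc ∑' p : E × E, G p.1 p.2 = ∑' i, ∑' j, G i j := hsum.tsum_prod
    _ = _ := by
      rw [hsp.2, hR.tsum_eq, Fintype.sum_option, add_comm]
      congr 1
      · rw [Fintype.sum_option]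
        simp only [collapsedPi, collapsedQ, collapsedFun, sub_self]
        rw [zero_pow two_ne_zero, mul_zero, zero_add]
        refine Finset.sum_congr rfl fun j _ => ?_
        rw [mul_div_cancel₀ _ hP]
      · refine Finset.sum_congr rfl fun i _ => ?_
        rw [(hrow i).2, Fintype.sum_option, add_comm]
        rfl
end
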